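/- arXiv:2111.04468 — 8 statements merged into one kernel-verified Lean document; each statement's English description precedes it below -/
import Mathlib

section
/- Let d ≥ 1 and let a, b ∈ ℤ[X] with deg a = d, deg b = 2d, positive leading coefficients A and B, and a(n) > 0, b(n) > 0 for all integers n ≥ 1. Let p, q be the convergents of PCF[a,b] and let L = lim_{n→∞} p_n/q_n. If the PCF does not have factorial reduction, i.e. limsup_{n→∞} (1/n)·ln( gcd(p_n,q_n) / (n!)^d ) = −∞, then for every real δ > −1 there exist infinitely many n with |L − p_n/q_n| ≥ ( q_n / gcd(p_n,q_n) )^{−(1+δ)}. In other words, a balanced-degree PCF can only provide a nontrivial effective irrationality measure if factorial reduction occurs. -/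
open Filter Polynomial

/-!
By the Casoratian identity `p_{n+1} q_n - p_n q_{n+1} = (-1)^n b_1 ⋯ b_{n+1}`, which is at least
`γ^{n+1} ((n+1)!)^{2d}` in absolute value, while `q_n` lies between `c^n (n!)^d` and `K^n (n!)^d`.
Hence consecutive convergents are at least `ρ^{n+1}` apart for some `ρ > 0`, and no real number is
closer than `(ρ/2)^n` to the `n`-th convergent for all large `n`. Without factorial reduction the
reduced denominators `q_n / gcd(p_n, q_n)` outgrow every geometric sequence, so each fixed negative
power of them is eventually below `(ρ/2)^n`.
-/

section Sequences

theorem eventually_lt_pow_of_limsup_log_eq_bot {x : ℕ → ℝ} (hx : ∀ n, 0 < x n)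
    (h : limsup (fun n : ℕ ↦ ((1 / n * Real.log (x n) : ℝ) : EReal)) atTop = ⊥)
    {ε : ℝ} (hε : 0 < ε) : ∀ᶠ n in atTop, x n < ε ^ n := by
  have hlog : ∀ᶠ n : ℕ in atTop, 1 / n * Real.log (x n) < Real.log ε := by
    simpa only [EReal.coe_lt_coe_iff] using
      eventually_lt_of_limsup_lt (h.trans_lt (EReal.bot_lt_coe (Real.log ε)))
  filter_upwards [hlog, eventually_gt_atTop 0] with n hn hn0
  rw [one_div, inv_mul_lt_iff₀ (Nat.cast_pos.2 hn0), ← Real.log_pow] at hn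
  exact (Real.log_lt_log_iff (hx n) (pow_pos hε n)).1 hn

theorem eventually_rpow_le_pow_of_forall_eventually_pow_le {x : ℕ → ℝ}
    (hx : ∀ S > 0, ∀ᶠ n in atTop, S ^ n ≤ x n) {s : ℝ} (hs : s < 0) {σ : ℝ} (hσ : 0 < σ) :
    ∀ᶠ n in atTop, x n ^ s ≤ σ ^ n := by
  have hS : 0 < σ ^ s⁻¹ := Real.rpow_pos_of_pos hσ _
  filter_upwards [hx _ hS] with n hn
  calc x n ^ s ≤ ((σ ^ s⁻¹) ^ n) ^ s := Real.rpow_le_rpow_of_nonpos (pow_pos hS n) hn hs.le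
    _ = σ ^ n := by rw [← Real.rpow_pow_comm hS.le, Real.rpow_inv_rpow hσ.le hs.ne]

theorem frequently_pow_le_dist {X : Type*} [PseudoMetricSpace X] {x : ℕ → X} {σ ρ : ℝ}
    (hσ : 0 < σ) (hσρ : σ < ρ) (hx : ∀ n, ρ ^ (n + 1) ≤ dist (x n) (x (n + 1))) (y : X) :
    ∃ᶠ n in atTop, σ ^ n ≤ dist y (x n) := by
  have hρ : 0 < ρ := hσ.trans hσρ
  intro hclose
  replace hclose : ∀ᶠ n in atTop, dist y (x n) < σ ^ n := hclose.mono fun _ ↦ lt_of_not_ge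
  have hlim : Tendsto (fun n : ℕ ↦ (σ / ρ) ^ n * (1 + σ)) atTop (nhds 0) := by
    simpa using (tendsto_pow_atTop_nhds_zero_of_lt_one (div_pos hσ hρ).le
      ((div_lt_one hρ).2 hσρ)).mul_const (1 + σ)
  obtain ⟨n, hn, hn_succ, hn_lim⟩ := (hclose.and (((tendsto_add_atTop_nat 1).eventually
    hclose).and (hlim.eventually_lt_const hρ))).exists
  have : ρ ^ (n + 1) < ρ ^ (n + 1) := by
    calc ρ ^ (n + 1) ≤ dist y (x n) + dist y (x (n + 1)) :=
          (hx n).trans (dist_triangle_left _ _ _)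
      _ < σ ^ n + σ ^ (n + 1) := add_lt_add hn hn_succ
      _ = ρ ^ n * ((σ / ρ) ^ n * (1 + σ)) := by rw [div_pow]; field_simp; ring
      _ < ρ ^ n * ρ := mul_lt_mul_of_pos_left hn_lim (pow_pos hρ n)
      _ = ρ ^ (n + 1) := (pow_succ ρ n).symm
  exact this.false

theorem exists_mul_pow_le_and_le_mul_pow_of_isTheta {f : ℕ → ℝ} {m : ℕ}
    (hpos : ∀ n, 1 ≤ n → 0 < f n) (hf : f =Θ[atTop] fun n ↦ (n : ℝ) ^ m) :
    (∃ c > 0, ∀ n, 1 ≤ n → c * n ^ m ≤ f n) ∧ ∃ C > 0, ∀ n, 1 ≤ n → f n ≤ C * n ^ m := by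
  have hpow {n : ℕ} (hn : 1 ≤ n) : 0 < (n : ℝ) ^ m := pow_pos (Nat.cast_pos.2 hn) m
  obtain ⟨C, hC, hfC⟩ := Asymptotics.bound_of_isBigO_nat_atTop hf.1
  obtain ⟨c, hc, hcf⟩ := Asymptotics.bound_of_isBigO_nat_atTop hf.2
  refine ⟨⟨c⁻¹, inv_pos.2 hc, fun n hn ↦ ?_⟩, C, hC, fun n hn ↦ ?_⟩
  · rw [inv_mul_le_iff₀ hc]
    simpa only [Real.norm_of_nonneg (hpos n hn).le, Real.norm_of_nonneg (hpow hn).le]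
      using hcf (hpos n hn).ne'
  · simpa only [Real.norm_of_nonneg (hpos n hn).le, Real.norm_of_nonneg (hpow hn).le]
      using hfC (hpow hn).ne'

theorem isTheta_eval_atTop {𝕜 : Type*} [NormedField 𝕜] [LinearOrder 𝕜] [IsStrictOrderedRing 𝕜]
    [OrderTopology 𝕜] {P : 𝕜[X]} (hP : P ≠ 0) :
    (fun x ↦ P.eval x) =Θ[atTop] fun x ↦ x ^ P.natDegree :=
  (Asymptotics.isTheta_const_mul_right (leadingCoeff_ne_zero.2 hP)).1
    P.isEquivalent_atTop_lead.isTheta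

theorem isTheta_intCast_eval_natCast {f : ℤ[X]} (hf : f ≠ 0) :
    (fun n : ℕ ↦ ((f.eval (n : ℤ) : ℤ) : ℝ)) =Θ[atTop] fun n ↦ (n : ℝ) ^ f.natDegree := by
  have hinj : Function.Injective (Int.castRingHom ℝ) := Int.cast_injective
  have heval (n : ℕ) : (f.map (Int.castRingHom ℝ)).eval (n : ℝ) = (f.eval (n : ℤ) : ℤ) := by
    simp
  have h := isTheta_eval_atTop ((Polynomial.map_ne_zero_iff hinj).2 hf)
  have hcast : Tendsto (fun n : ℕ ↦ (n : ℝ)) atTop atTop := tendsto_natCast_atTop_atTop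
  simp_rw [← heval, ← natDegree_map_eq_of_injective hinj f]
  exact ⟨h.1.comp_tendsto hcast, h.2.comp_tendsto hcast⟩

end Sequences

section Recurrence

theorem le_of_subsolution_of_supersolution {R : Type*} [Semiring R] [PartialOrder R]
    [IsOrderedRing R] {α β u v : ℕ → R} (hα : ∀ n, 0 ≤ α n) (hβ : ∀ n, 0 ≤ β n)
    (hu : ∀ n, u (n + 2) ≤ α n * u (n + 1) + β n * u n)
    (hv : ∀ n, α n * v (n + 1) + β n * v n ≤ v (n + 2))
    (h_zero : u 0 ≤ v 0) (h_one : u 1 ≤ v 1) (n : ℕ) : u n ≤ v n := by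
  induction n using Nat.twoStepInduction with
  | zero => exact h_zero
  | one => exact h_one
  | more n ih ih_succ =>
    calc u (n + 2) ≤ α n * u (n + 1) + β n * u n := hu n
      _ ≤ α n * v (n + 1) + β n * v n :=
        add_le_add (mul_le_mul_of_nonneg_left ih_succ (hα n)) (mul_le_mul_of_nonneg_left ih (hβ n))
      _ ≤ v (n + 2) := hv n

section Factorial

open scoped Nat

theorem add_two_pow_mul_factorial_pow_le (d n : ℕ) :
    ((n + 2 : ℕ) : ℝ) ^ (2 * d) * (n ! : ℝ) ^ d ≤ 2 ^ d * ((n + 2)! : ℝ) ^ d := by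
  have h : (n + 2) ^ 2 * n ! ≤ 2 * (n + 2)! := by
    calc (n + 2) ^ 2 * n ! = (n + 2) * n ! * (n + 2) := by ring
      _ ≤ (n + 2) * n ! * (2 * (n + 1)) := by gcongr; lia
      _ = 2 * (n + 2)! := by rw [Nat.factorial_succ, Nat.factorial_succ]; ring
  rw [pow_mul, ← mul_pow, ← mul_pow]
  exact_mod_cast Nat.pow_le_pow_left h d

theorem pow_mul_factorial_pow_supersolution {A B K a b : ℝ} {d n : ℕ} (hB : 0 ≤ B) (hK : 0 ≤ K)
    (hquad : A * K + 2 ^ d * B ≤ K ^ 2) (ha : a ≤ A * ((n + 2 : ℕ) : ℝ) ^ d)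
    (hb : b ≤ B * ((n + 2 : ℕ) : ℝ) ^ (2 * d)) :
    a * (K ^ (n + 1) * ((n + 1)! : ℝ) ^ d) + b * (K ^ n * (n ! : ℝ) ^ d) ≤
      K ^ (n + 2) * ((n + 2)! : ℝ) ^ d := by
  calc a * (K ^ (n + 1) * ((n + 1)! : ℝ) ^ d) + b * (K ^ n * (n ! : ℝ) ^ d)
      ≤ A * ((n + 2 : ℕ) : ℝ) ^ d * (K ^ (n + 1) * ((n + 1)! : ℝ) ^ d) +
          B * ((n + 2 : ℕ) : ℝ) ^ (2 * d) * (K ^ n * (n ! : ℝ) ^ d) := by gcongr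
    _ = A * K ^ (n + 1) * ((n + 2)! : ℝ) ^ d +
          B * K ^ n * (((n + 2 : ℕ) : ℝ) ^ (2 * d) * (n ! : ℝ) ^ d) := by
        rw [Nat.factorial_succ (n + 1), Nat.cast_mul, mul_pow]; ring
    _ ≤ A * K ^ (n + 1) * ((n + 2)! : ℝ) ^ d + B * K ^ n * (2 ^ d * ((n + 2)! : ℝ) ^ d) :=
        add_le_add_right (mul_le_mul_of_nonneg_left (add_two_pow_mul_factorial_pow_le d n)
          (by positivity)) _
    _ = (A * K + 2 ^ d * B) * (K ^ n * ((n + 2)! : ℝ) ^ d) := by ring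
    _ ≤ K ^ 2 * (K ^ n * ((n + 2)! : ℝ) ^ d) := by gcongr
    _ = K ^ (n + 2) * ((n + 2)! : ℝ) ^ d := by ring

end Factorial

/-- `p n` and `q n` are the numerator and denominator of the `n`-th convergent of the continued
fraction `α 0 + β 1 / (α 1 + β 2 / (α 2 + ⋯))`, produced by the recurrence without any reduction.
The conventional values `p₋₁ = 1` and `q₋₁ = 0` are absorbed into `num_one` and `den_one`. -/
structure IsConvergents {R : Type*} [CommRing R] (α β p q : ℕ → R) : Prop where
  num_zero : p 0 = α 0
  num_one : p 1 = α 1 * p 0 + β 1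
  num_add_two (n : ℕ) : p (n + 2) = α (n + 2) * p (n + 1) + β (n + 2) * p n
  den_zero : q 0 = 1
  den_one : q 1 = α 1
  den_add_two (n : ℕ) : q (n + 2) = α (n + 2) * q (n + 1) + β (n + 2) * q n

namespace IsConvergents

theorem map {R S : Type*} [CommRing R] [CommRing S] {α β p q : ℕ → R}
    (h : IsConvergents α β p q) (f : R →+* S) :
    IsConvergents (fun n ↦ f (α n)) (fun n ↦ f (β n)) (fun n ↦ f (p n)) (fun n ↦ f (q n)) where
  num_zero := by rw [h.num_zero]
  num_one := by rw [h.num_one, map_add, map_mul]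
  num_add_two n := by rw [h.num_add_two, map_add, map_mul, map_mul]
  den_zero := by rw [h.den_zero, map_one]
  den_one := by rw [h.den_one]
  den_add_two n := by rw [h.den_add_two, map_add, map_mul, map_mul]

theorem casoratian_eq {R : Type*} [CommRing R] {α β p q : ℕ → R} (h : IsConvergents α β p q)
    (n : ℕ) : p (n + 1) * q n - p n * q (n + 1) =
      (-1) ^ n * ∏ i ∈ Finset.range (n + 1), β (i + 1) := by
  induction n with
  | zero =>
    rw [h.num_one, h.den_one, h.den_zero, Finset.prod_range_one]
    ring
  | succ n ih =>
    rw [Finset.prod_range_succ, pow_succ, h.num_add_two, h.den_add_two]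
    linear_combination -β (n + 2) * ih

theorem den_pos {R : Type*} [CommRing R] [PartialOrder R] [IsStrictOrderedRing R]
    {α β p q : ℕ → R} (h : IsConvergents α β p q) (hα : ∀ n, 1 ≤ n → 0 < α n)
    (hβ : ∀ n, 1 ≤ n → 0 ≤ β n) (n : ℕ) : 0 < q n := by
  induction n using Nat.twoStepInduction with
  | zero => exact h.den_zero ▸ one_pos
  | one => exact h.den_one ▸ hα 1 le_rfl
  | more n ih ih_succ =>
    rw [h.den_add_two]
    exact add_pos_of_pos_of_nonneg (mul_pos (hα (n + 2) (by lia)) ih_succ)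
      (mul_nonneg (hβ (n + 2) (by lia)) ih.le)

section Growth

open scoped Nat

variable {α β p q : ℕ → ℝ} {d : ℕ}

theorem pow_mul_factorial_pow_le_den (h : IsConvergents α β p q) {c : ℝ} (hc : 0 ≤ c)
    (hα : ∀ n, 1 ≤ n → c * n ^ d ≤ α n) (hβ : ∀ n, 1 ≤ n → 0 ≤ β n) (n : ℕ) :
    c ^ n * (n ! : ℝ) ^ d ≤ q n := by
  refine le_of_subsolution_of_supersolution (u := fun n ↦ c ^ n * (n ! : ℝ) ^ d)
    (fun n ↦ le_trans (by positivity) (hα (n + 2) (by lia))) (fun n ↦ hβ (n + 2) (by lia))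
    (fun n ↦ ?_) (fun n ↦ (h.den_add_two n).ge) (by simp [h.den_zero])
    (by simpa [h.den_one] using hα 1 le_rfl) n
  calc c ^ (n + 2) * ((n + 2)! : ℝ) ^ d
      = c * ((n + 2 : ℕ) : ℝ) ^ d * (c ^ (n + 1) * ((n + 1)! : ℝ) ^ d) := by
        rw [Nat.factorial_succ (n + 1), Nat.cast_mul, mul_pow]; ring
    _ ≤ α (n + 2) * (c ^ (n + 1) * ((n + 1)! : ℝ) ^ d) := by
        gcongr; exact hα (n + 2) (by lia)
    _ ≤ α (n + 2) * (c ^ (n + 1) * ((n + 1)! : ℝ) ^ d) + β (n + 2) * (c ^ n * (n ! : ℝ) ^ d) :=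
        le_add_of_nonneg_right (mul_nonneg (hβ (n + 2) (by lia)) (by positivity))

theorem den_le_pow_mul_factorial_pow (h : IsConvergents α β p q) {A B : ℝ}
    (hα₀ : ∀ n, 1 ≤ n → 0 ≤ α n) (hα : ∀ n, 1 ≤ n → α n ≤ A * n ^ d)
    (hβ₀ : ∀ n, 1 ≤ n → 0 ≤ β n) (hβ : ∀ n, 1 ≤ n → β n ≤ B * n ^ (2 * d)) (n : ℕ) :
    q n ≤ (A + 2 ^ d * B + 1) ^ n * (n ! : ℝ) ^ d := by
  have hA : 0 ≤ A := by simpa using (hα₀ 1 le_rfl).trans (hα 1 le_rfl)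
  have hB : 0 ≤ B := by simpa using (hβ₀ 1 le_rfl).trans (hβ 1 le_rfl)
  have hdB : 0 ≤ 2 ^ d * B := by positivity
  set K := A + 2 ^ d * B + 1
  have hK₀ : 0 ≤ K := by positivity
  have hquad : A * K + 2 ^ d * B ≤ K ^ 2 := by nlinarith
  have hq_one : q 1 ≤ K := by
    have : q 1 ≤ A := by simpa [h.den_one] using hα 1 le_rfl
    linarith
  exact le_of_subsolution_of_supersolution (v := fun n ↦ K ^ n * (n ! : ℝ) ^ d)
    (fun n ↦ hα₀ (n + 2) (by lia)) (fun n ↦ hβ₀ (n + 2) (by lia)) (fun n ↦ (h.den_add_two n).le)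
    (fun n ↦ pow_mul_factorial_pow_supersolution hB hK₀ hquad (hα (n + 2) (by lia))
      (hβ (n + 2) (by lia)))
    (by simp [h.den_zero]) (by simpa using hq_one) n

theorem pow_mul_factorial_pow_le_abs_casoratian (h : IsConvergents α β p q) {m : ℕ} {γ : ℝ}
    (hγ : 0 ≤ γ) (hβ : ∀ n, 1 ≤ n → γ * n ^ m ≤ β n) (n : ℕ) :
    γ ^ (n + 1) * ((n + 1)! : ℝ) ^ m ≤ |p (n + 1) * q n - p n * q (n + 1)| := by
  calc γ ^ (n + 1) * ((n + 1)! : ℝ) ^ m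
      = ∏ i ∈ Finset.range (n + 1), γ * ((i + 1 : ℕ) : ℝ) ^ m := by
        rw [Finset.prod_mul_distrib, Finset.prod_const, Finset.card_range, Finset.prod_pow,
          ← Nat.cast_prod, Finset.prod_range_add_one_eq_factorial]
    _ ≤ ∏ i ∈ Finset.range (n + 1), β (i + 1) :=
        Finset.prod_le_prod (fun i _ ↦ by positivity) fun i _ ↦ hβ (i + 1) (by lia)
    _ ≤ |∏ i ∈ Finset.range (n + 1), β (i + 1)| := le_abs_self _
    _ = |p (n + 1) * q n - p n * q (n + 1)| := by
        rw [h.casoratian_eq, abs_mul, abs_neg_one_pow, one_mul]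

theorem exists_pow_le_dist_convergents (h : IsConvergents α β p q)
    (hα₀ : ∀ n, 1 ≤ n → 0 < α n) (hα : α =Θ[atTop] fun n ↦ (n : ℝ) ^ d)
    (hβ₀ : ∀ n, 1 ≤ n → 0 < β n) (hβ : β =Θ[atTop] fun n ↦ (n : ℝ) ^ (2 * d)) :
    ∃ ρ > 0, ∀ n, ρ ^ (n + 1) ≤ dist (p n / q n) (p (n + 1) / q (n + 1)) := by
  obtain ⟨-, A, hA, hαA⟩ := exists_mul_pow_le_and_le_mul_pow_of_isTheta hα₀ hα
  obtain ⟨⟨γ, hγ, hγβ⟩, B, hB, hβB⟩ := exists_mul_pow_le_and_le_mul_pow_of_isTheta hβ₀ hβ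
  have hq : ∀ n, 0 < q n := h.den_pos hα₀ fun n hn ↦ (hβ₀ n hn).le
  have hdB : 0 < 2 ^ d * B := by positivity
  obtain ⟨K, hK_one, hqK⟩ : ∃ K ≥ 1, ∀ n, q n ≤ K ^ n * (n ! : ℝ) ^ d :=
    ⟨A + 2 ^ d * B + 1, by linarith, h.den_le_pow_mul_factorial_pow (fun n hn ↦ (hα₀ n hn).le) hαA
      (fun n hn ↦ (hβ₀ n hn).le) hβB⟩
  have : 0 < K := by linarith
  refine ⟨γ / K ^ 2, by positivity, fun n ↦ ?_⟩
  have hqq : q (n + 1) * q n ≤ (K ^ (n + 1) * ((n + 1)! : ℝ) ^ d) ^ 2 := by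
    have hqn : q n ≤ K ^ (n + 1) * ((n + 1)! : ℝ) ^ d :=
      (hqK n).trans (by gcongr <;> lia)
    rw [sq]
    exact mul_le_mul (hqK (n + 1)) hqn (hq n).le (by positivity)
  rw [dist_comm, Real.dist_eq, div_sub_div _ _ (hq (n + 1)).ne' (hq n).ne', abs_div,
    abs_of_pos (mul_pos (hq (n + 1)) (hq n)), le_div_iff₀ (mul_pos (hq (n + 1)) (hq n))]
  calc (γ / K ^ 2) ^ (n + 1) * (q (n + 1) * q n)
      ≤ (γ / K ^ 2) ^ (n + 1) * (K ^ (n + 1) * ((n + 1)! : ℝ) ^ d) ^ 2 := by gcongr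
    _ = γ ^ (n + 1) * ((n + 1)! : ℝ) ^ (2 * d) := by
        rw [div_pow, ← pow_mul, mul_comm 2 (n + 1)]; field_simp; ring
    _ ≤ |p (n + 1) * q n - p n * q (n + 1)| :=
        h.pow_mul_factorial_pow_le_abs_casoratian hγ.le hγβ n
    _ = |p (n + 1) * q n - q (n + 1) * p n| := by rw [mul_comm (p n)]

theorem eventually_pow_le_den_div (h : IsConvergents α β p q)
    (hα₀ : ∀ n, 1 ≤ n → 0 < α n) (hα : α =Θ[atTop] fun n ↦ (n : ℝ) ^ d)
    (hβ₀ : ∀ n, 1 ≤ n → 0 ≤ β n) {g : ℕ → ℝ} (hg : ∀ n, 0 < g n)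
    (hlim : limsup (fun n : ℕ ↦ ((1 / n * Real.log (g n / (n ! : ℝ) ^ d) : ℝ) : EReal)) atTop = ⊥)
    (S : ℝ) (hS : 0 < S) : ∀ᶠ n in atTop, S ^ n ≤ q n / g n := by
  obtain ⟨⟨c, hc, hcα⟩, -⟩ := exists_mul_pow_le_and_le_mul_pow_of_isTheta hα₀ hα
  have hgfac (n : ℕ) : 0 < g n / (n ! : ℝ) ^ d := div_pos (hg n) (by positivity)
  filter_upwards [eventually_lt_pow_of_limsup_log_eq_bot hgfac hlim (div_pos hc hS)] with n hn
  rw [div_lt_iff₀ (by positivity)] at hn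
  rw [le_div_iff₀ (hg n)]
  calc S ^ n * g n ≤ S ^ n * ((c / S) ^ n * (n ! : ℝ) ^ d) := by gcongr
    _ = c ^ n * (n ! : ℝ) ^ d := by rw [div_pow]; field_simp
    _ ≤ q n := h.pow_mul_factorial_pow_le_den hc.le hcα hβ₀ n

end Growth

end IsConvergents

end Recurrence

open scoped Nat in
theorem stmt_0_general {α β p q : ℕ → ℝ} (h : IsConvergents α β p q) {d : ℕ}
    (hα₀ : ∀ n, 1 ≤ n → 0 < α n) (hα : α =Θ[atTop] fun n ↦ (n : ℝ) ^ d)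
    (hβ₀ : ∀ n, 1 ≤ n → 0 < β n) (hβ : β =Θ[atTop] fun n ↦ (n : ℝ) ^ (2 * d))
    {g : ℕ → ℝ} (hg : ∀ n, 0 < g n)
    (hlim : limsup (fun n : ℕ ↦ ((1 / n * Real.log (g n / (n ! : ℝ) ^ d) : ℝ) : EReal)) atTop = ⊥)
    (x : ℝ) {δ : ℝ} (hδ : -1 < δ) :
    ∃ᶠ n in atTop, (q n / g n) ^ (-(1 + δ)) ≤ |x - p n / q n| := by
  obtain ⟨ρ, hρ, hgap⟩ := h.exists_pow_le_dist_convergents hα₀ hα hβ₀ hβ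
  have hfar : ∃ᶠ n in atTop, (ρ / 2) ^ n ≤ dist x (p n / q n) :=
    frequently_pow_le_dist (half_pos hρ) (half_lt_self hρ) hgap x
  have hsmall : ∀ᶠ n in atTop, (q n / g n) ^ (-(1 + δ)) ≤ (ρ / 2) ^ n :=
    eventually_rpow_le_pow_of_forall_eventually_pow_le
      (h.eventually_pow_le_den_div hα₀ hα (fun n hn ↦ (hβ₀ n hn).le) hg hlim)
      (by linarith) (half_pos hρ)
  exact (hfar.and_eventually hsmall).mono fun n hn ↦ hn.2.trans hn.1

/-- Theorem 1, necessity of factorial reduction.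
For a balanced-degree PCF `[a, b]` (with `deg a = d`, `deg b = 2d`, positive leading
coefficients and positive values on positive integers), if the PCF does not have
factorial reduction, i.e. `limsup (1/n)·ln(gcd(pₙ,qₙ)/(n!)^d) = −∞`, then for every
`δ > −1` there are infinitely many `n` with
`|L − pₙ/qₙ| ≥ (qₙ/gcd(pₙ,qₙ))^(−(1+δ))`. -/
theorem stmt_0 (d : ℕ) (hd : 1 ≤ d) (a b : Polynomial ℤ)
    (hda : a.natDegree = d) (hdb : b.natDegree = 2 * d)
    (hA : 0 < a.leadingCoeff) (hB : 0 < b.leadingCoeff)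
    (hapos : ∀ n : ℕ, 1 ≤ n → 0 < a.eval (n : ℤ))
    (hbpos : ∀ n : ℕ, 1 ≤ n → 0 < b.eval (n : ℤ))
    (p q : ℕ → ℤ)
    (hp0 : p 0 = a.eval 0) (hq0 : q 0 = 1)
    (hp1 : p 1 = a.eval 1 * p 0 + b.eval 1 * 1)
    (hq1 : q 1 = a.eval 1 * q 0 + b.eval 1 * 0)
    (hprec : ∀ n : ℕ, p (n + 2) = a.eval ((n : ℤ) + 2) * p (n + 1) + b.eval ((n : ℤ) + 2) * p n)
    (hqrec : ∀ n : ℕ, q (n + 2) = a.eval ((n : ℤ) + 2) * q (n + 1) + b.eval ((n : ℤ) + 2) * q n)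
    (L : ℝ)
    (hL : Tendsto (fun n : ℕ => (p n : ℝ) / (q n : ℝ)) atTop (nhds L))
    (hnoFR : limsup (fun n : ℕ =>
        (((1 : ℝ) / n * Real.log ((Int.gcd (p n) (q n) : ℝ) / (Nat.factorial n : ℝ) ^ d)) : EReal))
        atTop = ⊥) :
    ∀ δ : ℝ, -1 < δ →
      ∃ᶠ n : ℕ in atTop,
        ((q n : ℝ) / (Int.gcd (p n) (q n) : ℝ)) ^ (-(1 + δ)) ≤ |L - (p n : ℝ) / (q n : ℝ)| := by
  intro δ hδ
  have hZ : IsConvergents (fun n ↦ a.eval (n : ℤ)) (fun n ↦ b.eval (n : ℤ)) p q :=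
    { num_zero := hp0
      num_one := by simpa using hp1
      num_add_two := by simpa using hprec
      den_zero := hq0
      den_one := by simpa [hq0] using hq1
      den_add_two := by simpa using hqrec }
  have hgcd (n : ℕ) : 0 < Int.gcd (p n) (q n) := Int.gcd_pos_of_ne_zero_right _
    (ne_of_gt (hZ.den_pos hapos (fun n hn ↦ (hbpos n hn).le) n))
  -- `hnoFR` coerces each factor to `EReal` separately, which is definitionally the coercion
  -- of the real product.
  exact stmt_0_general (hZ.map (Int.castRingHom ℝ)) (fun n hn ↦ Int.cast_pos.2 (hapos n hn))
    (hda ▸ isTheta_intCast_eval_natCast (leadingCoeff_ne_zero.1 hA.ne'))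
    (fun n hn ↦ Int.cast_pos.2 (hbpos n hn))
    (hdb ▸ isTheta_intCast_eval_natCast (leadingCoeff_ne_zero.1 hB.ne'))
    (fun n ↦ Nat.cast_pos.2 (hgcd n)) hnoFR L hδ
end

section
/- Let d ≥ 1 and let a, b ∈ ℤ[X] with deg a = d, deg b = 2d, positive leading coefficients A and B, and a(n) > 0, b(n) > 0 for all integers n ≥ 1. Let α = (A + √(A² + 4B))/2 be the larger root of x² = Ax + B, let p, q be the convergents of PCF[a,b], and let L = lim_{n→∞} p_n/q_n. Suppose the limit ln λ := lim_{n→∞} (1/n)·ln( gcd(p_n,q_n) / (n!)^d ) exists with 0 < λ < α. Then lim_{n→∞} ( −ln|L − p_n/q_n| ) / ln( q_n / gcd(p_n,q_n) ) = 1 + δ, where δ = (ln α − ln B + ln λ)/(ln α − ln λ); i.e., the effective irrationality measure provided by the PCF equals (ln α − ln B + ln λ)/(ln α − ln λ). -/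
open Filter Polynomial

/-!
Dividing the numerators and denominators by `(n !) ^ d` leaves the convergents unchanged and turns
the recurrence into one with convergent coefficients, with limits `A` and `B`. By the
Poincaré–Perron argument the rescaled denominators then grow like `α ^ n`. Consecutive differences
of convergents alternate in sign and shrink by factors tending to `B / α ^ 2 < 1`, so the
convergents are nested around `L` and the error is of exponential order `(B / α ^ 2) ^ n`. Comparing
logarithms with those of the reduced denominators, of order `(α / λ) ^ n`, gives the measure.
-/

open scoped Topology

section Sequences

theorem tendsto_zero_of_succ_le_mul_add {u e : ℕ → ℝ} {ρ : ℝ} (hρ₀ : 0 ≤ ρ) (hρ₁ : ρ < 1)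
    (hu : ∀ n, 0 ≤ u n) (hstep : ∀ n, u (n + 1) ≤ ρ * u n + e n) (he : Tendsto e atTop (𝓝 0)) :
    Tendsto u atTop (𝓝 0) := by
  refine tendsto_order.2 ⟨fun x hx => .of_forall fun n => hx.trans_le (hu n), fun ε hε => ?_⟩
  have hsmall : ∀ᶠ n in atTop, e n < (1 - ρ) * (ε / 2) :=
    he.eventually_lt_const (mul_pos (sub_pos.2 hρ₁) (half_pos hε))
  obtain ⟨N, hN⟩ := eventually_atTop.1 hsmall
  have hgeom : ∀ k, u (N + k) ≤ ρ ^ k * u N + ε / 2 := by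
    intro k
    induction k with
    | zero => simpa using (half_pos hε).le
    | succ k ih =>
      calc u (N + (k + 1)) ≤ ρ * u (N + k) + e (N + k) := hstep (N + k)
        _ ≤ ρ * (ρ ^ k * u N + ε / 2) + (1 - ρ) * (ε / 2) := by
          gcongr
          exact (hN (N + k) le_self_add).le
        _ = ρ ^ (k + 1) * u N + ε / 2 := by ring
  have hdecay : Tendsto (fun k => ρ ^ k * u N) atTop (𝓝 0) := by
    simpa using (tendsto_pow_atTop_nhds_zero_of_lt_one hρ₀ hρ₁).mul_const (u N)
  obtain ⟨K, hK⟩ := eventually_atTop.1 (hdecay.eventually_lt_const (half_pos hε))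
  filter_upwards [eventually_ge_atTop (N + K)] with n hn
  obtain ⟨k, rfl⟩ := Nat.exists_eq_add_of_le (le_self_add.trans hn)
  linarith [hgeom k, hK k (by lia)]

theorem tendsto_log_div_nat_of_tendsto_ratio {u : ℕ → ℝ} {l : ℝ} (hl : l ≠ 0) (hu : ∀ n, u n ≠ 0)
    (hratio : Tendsto (fun n => u (n + 1) / u n) atTop (𝓝 l)) :
    Tendsto (fun n : ℕ => Real.log (u n) / n) atTop (𝓝 (Real.log l)) := by
  have hmean := (hratio.log hl).cesaro.add (tendsto_const_div_atTop_nhds_zero_nat (Real.log (u 0)))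
  rw [add_zero] at hmean
  refine hmean.congr fun n => ?_
  have htelescope : ∑ i ∈ Finset.range n, Real.log (u (i + 1) / u i) =
      Real.log (u n) - Real.log (u 0) := by
    simp only [Real.log_div (hu _) (hu _), Finset.sum_range_sub (fun i => Real.log (u i))]
  rw [htelescope]
  ring

theorem limit_mem_uIcc_of_forall_mem_uIcc {X : Type*} [LinearOrder X] [TopologicalSpace X]
    [OrderClosedTopology X] {c : ℕ → X} {L : X}
    (hnested : ∀ n, c (n + 2) ∈ Set.uIcc (c n) (c (n + 1))) (hL : Tendsto c atTop (𝓝 L)) (n : ℕ) :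
    L ∈ Set.uIcc (c n) (c (n + 1)) := by
  have htail : ∀ k, Set.uIcc (c (n + k)) (c (n + k + 1)) ⊆ Set.uIcc (c n) (c (n + 1)) := by
    intro k
    induction k with
    | zero => rfl
    | succ k ih =>
      exact (Set.uIcc_subset_uIcc Set.right_mem_uIcc (hnested (n + k))).trans ih
  refine isClosed_Icc.mem_of_tendsto hL ?_
  filter_upwards [eventually_ge_atTop n] with m hm
  obtain ⟨k, rfl⟩ := Nat.exists_eq_add_of_le hm
  exact htail k Set.left_mem_uIcc

theorem mem_uIcc_of_sub_eq_neg_mul_sub {𝕜 : Type*} [Field 𝕜] [LinearOrder 𝕜]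
    [IsStrictOrderedRing 𝕜] {x y z t : 𝕜} (h : z - y = -t * (y - x))
    (ht : t ∈ Set.Icc 0 1) : z ∈ Set.uIcc x y := by
  rw [← segment_eq_uIcc]
  refine ⟨t, 1 - t, ht.1, sub_nonneg.2 ht.2, by ring, ?_⟩
  simp only [smul_eq_mul]
  linarith

variable {c r : ℕ → ℝ} {L ρ : ℝ}

theorem abs_limit_sub_mem_Icc (hstep : ∀ n, c (n + 2) - c (n + 1) = -r n * (c (n + 1) - c n))
    (hr : ∀ n, r n ∈ Set.Icc 0 1) (hL : Tendsto c atTop (𝓝 L)) (n : ℕ) :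
    |L - c n| ∈ Set.Icc ((1 - r n) * |c (n + 1) - c n|) |c (n + 1) - c n| := by
  have hmem : ∀ m, L ∈ Set.uIcc (c m) (c (m + 1)) :=
    limit_mem_uIcc_of_forall_mem_uIcc (fun m => mem_uIcc_of_sub_eq_neg_mul_sub (hstep m) (hr m)) hL
  have hnext : |L - c (n + 1)| ≤ r n * |c (n + 1) - c n| := by
    have := Set.abs_sub_left_of_mem_uIcc (hmem (n + 1))
    rwa [hstep n, abs_mul, abs_neg, abs_of_nonneg (hr n).1] at this
  have htriangle := abs_sub_le (c (n + 1)) L (c n)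
  rw [abs_sub_comm (c (n + 1)) L] at htriangle
  exact ⟨by linarith, Set.abs_sub_left_of_mem_uIcc (hmem n)⟩

theorem tendsto_log_abs_limit_sub_div_nat
    (hstep : ∀ n, c (n + 2) - c (n + 1) = -r n * (c (n + 1) - c n))
    (hr : ∀ n, r n ∈ Set.Ioo 0 1) (hρ : ρ ∈ Set.Ioo 0 1) (hrρ : Tendsto r atTop (𝓝 ρ))
    (hne : c 1 ≠ c 0) (hL : Tendsto c atTop (𝓝 L)) :
    Tendsto (fun n : ℕ => Real.log |L - c n| / n) atTop (𝓝 (Real.log ρ)) := by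
  have hgap_ne : ∀ n, c (n + 1) - c n ≠ 0 := by
    intro n
    induction n with
    | zero => exact sub_ne_zero.2 hne
    | succ n ih => exact hstep n ▸ mul_ne_zero (neg_ne_zero.2 (hr n).1.ne') ih
  have hgap_log : Tendsto (fun n : ℕ => Real.log |c (n + 1) - c n| / n) atTop (𝓝 (Real.log ρ)) := by
    refine tendsto_log_div_nat_of_tendsto_ratio hρ.1.ne' (fun n => abs_ne_zero.2 (hgap_ne n))
      (hrρ.congr fun n => ?_)
    rw [hstep n, abs_mul, abs_neg, abs_of_pos (hr n).1,
      mul_div_cancel_right₀ _ (abs_ne_zero.2 (hgap_ne n))]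
  have hfactor_log : Tendsto (fun n : ℕ => Real.log (1 - r n) / n) atTop (𝓝 0) :=
    ((hrρ.const_sub 1).log (sub_pos.2 hρ.2).ne').div_atTop tendsto_natCast_atTop_atTop
  have hlower := hfactor_log.add hgap_log
  rw [zero_add] at hlower
  have hfactor_pos : ∀ n, 0 < 1 - r n := fun n => sub_pos.2 (hr n).2
  have hbounds := abs_limit_sub_mem_Icc hstep (fun n => Set.Ioo_subset_Icc_self (hr n)) hL
  refine tendsto_of_tendsto_of_tendsto_of_le_of_le hlower hgap_log (fun n => ?_) (fun n => ?_)
  · rw [← add_div, ← Real.log_mul (hfactor_pos n).ne' (abs_ne_zero.2 (hgap_ne n))]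
    have hpos := mul_pos (hfactor_pos n) (abs_pos.2 (hgap_ne n))
    have := (hbounds n).1
    gcongr
  · have hpos : 0 < |L - c n| :=
      (mul_pos (hfactor_pos n) (abs_pos.2 (hgap_ne n))).trans_le (hbounds n).1
    have := (hbounds n).2
    gcongr

end Sequences

section PerturbedMobius

variable {α β : ℝ}

-- The coordinate `(x - α) / (x + β)` conjugates `x ↦ (α - β) + α * β / x` to multiplication by
-- `-(β / α)`.
theorem abs_mobius_coordinate_le (hα : 0 < α) (hβ : 0 < β) {x a b : ℝ} (hx : 0 < x) (ha : 0 < a)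
    (hb : 0 < b) :
    |(a + b / x - α) / (a + b / x + β)| ≤ β / α * |(x - α) / (x + β)| +
      (1 + β / α) * (|a - (α - β)| / β + |b - α * β| / b) := by
  have hden : 0 < a + b / x + β := by positivity
  have hconj : (a + b / x - α) / (a + b / x + β) = -(β / α * ((x - α) / (x + β))) +
      (1 + β / α) * (x / (x + β)) *
        ((a - (α - β)) / (a + b / x + β) + (b - α * β) / (x * (a + b / x + β))) := by
    field_simp
    ring
  have hx_le : x / (x + β) ≤ 1 := div_le_one_of_le₀ (by linarith) (by positivity)
  have ha_le : |a - (α - β)| / (a + b / x + β) ≤ |a - (α - β)| / β := by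
    gcongr
    linarith [div_pos hb hx]
  have hb_le : |b - α * β| / (x * (a + b / x + β)) ≤ |b - α * β| / b := by
    gcongr
    have : x * (a + b / x + β) = b + x * (a + β) := by field_simp; ring
    rw [this]
    nlinarith [mul_pos hx ha, mul_pos hx hβ]
  calc |(a + b / x - α) / (a + b / x + β)|
      ≤ β / α * |(x - α) / (x + β)| + (1 + β / α) * (x / (x + β)) *
          (|a - (α - β)| / (a + b / x + β) + |b - α * β| / (x * (a + b / x + β))) := by
        rw [hconj]
        refine (abs_add_le _ _).trans ?_
        rw [abs_neg, abs_mul, abs_mul _ (_ + _), abs_of_pos (show 0 < β / α by positivity),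
          abs_of_pos (show 0 < (1 + β / α) * (x / (x + β)) by positivity)]
        gcongr
        refine (abs_add_le _ _).trans_eq ?_
        rw [abs_div, abs_div, abs_of_pos hden, abs_of_pos (mul_pos hx hden)]
    _ ≤ β / α * |(x - α) / (x + β)| +
          (1 + β / α) * 1 * (|a - (α - β)| / β + |b - α * β| / b) := by gcongr
    _ = _ := by rw [mul_one]

theorem tendsto_of_perturbed_mobius (hβ : 0 < β) (hβα : β < α) {s a b : ℕ → ℝ}
    (hs : ∀ n, 0 < s n) (ha : ∀ n, 0 < a n) (hb : ∀ n, 0 < b n)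
    (hstep : ∀ n, s (n + 1) = a n + b n / s n)
    (ha_lim : Tendsto a atTop (𝓝 (α - β))) (hb_lim : Tendsto b atTop (𝓝 (α * β))) :
    Tendsto s atTop (𝓝 α) := by
  have hα : 0 < α := hβ.trans hβα
  have herror : Tendsto (fun n => (1 + β / α) * (|a n - (α - β)| / β + |b n - α * β| / b n))
      atTop (𝓝 0) := by
    have ha_err := (ha_lim.sub_const (α - β)).abs.div_const β
    have hb_err := (hb_lim.sub_const (α * β)).abs.div hb_lim (mul_pos hα hβ).ne'
    simpa using (ha_err.add hb_err).const_mul (1 + β / α)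
  have hcoord : Tendsto (fun n => (s n - α) / (s n + β)) atTop (𝓝 0) := by
    refine (tendsto_zero_iff_abs_tendsto_zero _).2 ?_
    refine tendsto_zero_of_succ_le_mul_add (by positivity) ((div_lt_one hα).2 hβα)
      (fun n => abs_nonneg _) (fun n => ?_) herror
    simpa only [Function.comp_apply, hstep] using
      abs_mobius_coordinate_le hα hβ (hs n) (ha n) (hb n)
  have hinv := ((hcoord.const_mul β).const_add α).div (hcoord.const_sub 1) (by norm_num)
  simp only [mul_zero, add_zero, sub_zero, div_one] at hinv
  refine hinv.congr fun n => ?_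
  have hsn := hs n
  have hden : 1 - (s n - α) / (s n + β) = (α + β) / (s n + β) := by
    field_simp
    ring
  simp only [Pi.div_apply, hden]
  field_simp
  ring

end PerturbedMobius

/-- The root `(A + √(A ^ 2 + 4 * B)) / 2` of `x ^ 2 = A * x + B`, which is the larger one when
the roots are real. -/
noncomputable def dominantRoot (A B : ℝ) : ℝ := (A + √(A ^ 2 + 4 * B)) / 2

section DominantRoot

variable {A B : ℝ}

theorem dominantRoot_sq (h : 0 ≤ A ^ 2 + 4 * B) :
    dominantRoot A B ^ 2 = A * dominantRoot A B + B := by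
  unfold dominantRoot
  linear_combination (1 / 4) * Real.sq_sqrt h

theorem abs_lt_two_mul_dominantRoot_sub (hB : 0 < B) : |A| < 2 * dominantRoot A B - A := by
  have : |A| < √(A ^ 2 + 4 * B) := (Real.lt_sqrt (abs_nonneg A)).2 (by rw [sq_abs]; linarith)
  unfold dominantRoot
  linarith

theorem dominantRoot_pos (hB : 0 < B) : 0 < dominantRoot A B := by
  linarith [abs_lt_two_mul_dominantRoot_sub (A := A) hB, neg_abs_le A]

theorem lt_dominantRoot (hB : 0 < B) : A < dominantRoot A B := by
  linarith [abs_lt_two_mul_dominantRoot_sub (A := A) hB, le_abs_self A]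

theorem div_dominantRoot_sq_lt_one (hA : 0 < A) (hB : 0 < B) : B / dominantRoot A B ^ 2 < 1 := by
  have hα := dominantRoot_pos (A := A) hB
  rw [div_lt_one (by positivity), dominantRoot_sq (by positivity)]
  linarith [mul_pos hA hα]

end DominantRoot

/-- `u` solves the recurrence `u n = a n * u (n - 1) + b n * u (n - 2)` for `n ≥ 2`, as do the
numerators and the denominators of the continued fraction with partial denominators `a` and partial
numerators `b`. The index is shifted to avoid truncated subtraction. -/
def IsThreeTermSolution {R : Type*} [Semiring R] (a b u : ℕ → R) : Prop :=
  ∀ n, u (n + 2) = a (n + 2) * u (n + 1) + b (n + 2) * u n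

namespace IsThreeTermSolution

theorem map {R S : Type*} [Semiring R] [Semiring S] {a b u : ℕ → R}
    (hu : IsThreeTermSolution a b u) (f : R →+* S) :
    IsThreeTermSolution (fun n => f (a n)) (fun n => f (b n)) (fun n => f (u n)) := fun n => by
  simp only [hu n, map_add, map_mul]

theorem pos {R : Type*} [Semiring R] [PartialOrder R] [IsStrictOrderedRing R] {a b u : ℕ → R}
    (hu : IsThreeTermSolution a b u) (ha : ∀ n, 0 < a (n + 2)) (hb : ∀ n, 0 < b (n + 2))
    (h₀ : 0 < u 0) (h₁ : 0 < u 1) (n : ℕ) : 0 < u n := by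
  induction n using Nat.twoStepInduction with
  | zero => exact h₀
  | one => exact h₁
  | more n ih₀ ih₁ => exact hu n ▸ add_pos (mul_pos (ha n) ih₁) (mul_pos (hb n) ih₀)

section Field

variable {K : Type*} [Field K] {a b p q : ℕ → K}

theorem div_factorial_pow [CharZero K] {u : ℕ → K} (hu : IsThreeTermSolution a b u) (d : ℕ) :
    IsThreeTermSolution (fun n => a n / (n : K) ^ d)
      (fun n => b n / ((n : K) ^ d * ((n : K) - 1) ^ d))
      (fun n => u n / (n.factorial : K) ^ d) := by
  intro n
  have hfact : (n.factorial : K) ≠ 0 := Nat.cast_ne_zero.2 n.factorial_ne_zero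
  have h₁ : (n : K) + 1 ≠ 0 := Nat.cast_add_one_ne_zero n
  have h₂ : (n : K) + 2 ≠ 0 := mod_cast (n + 1).succ_ne_zero
  have hsub : (n : K) + 2 - 1 = n + 1 := by ring
  simp only [hu n, Nat.factorial_succ, Nat.cast_mul, mul_pow, Nat.cast_add, Nat.cast_one,
    Nat.cast_ofNat, hsub, add_assoc, one_add_one_eq_two]
  field_simp

theorem convergent_sub_eq_neg_mul_sub (hp : IsThreeTermSolution a b p)
    (hq : IsThreeTermSolution a b q) (hq_ne : ∀ n, q n ≠ 0) (n : ℕ) :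
    p (n + 2) / q (n + 2) - p (n + 1) / q (n + 1) =
      -(b (n + 2) * q n / q (n + 2)) * (p (n + 1) / q (n + 1) - p n / q n) := by
  rw [div_sub_div _ _ (hq_ne _) (hq_ne _), div_sub_div _ _ (hq_ne _) (hq_ne _)]
  have h₀ := hq_ne n
  have h₁ := hq_ne (n + 1)
  have h₂ := hq_ne (n + 2)
  field_simp
  rw [hp n, hq n]
  ring

end Field

variable {a b p q : ℕ → ℝ} {A B L : ℝ}

theorem tendsto_ratio (hq : IsThreeTermSolution a b q) (ha : ∀ n, 0 < a (n + 2))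
    (hb : ∀ n, 0 < b (n + 2)) (hq_pos : ∀ n, 0 < q n) (hA : 0 < A) (hB : 0 < B)
    (ha_lim : Tendsto a atTop (𝓝 A)) (hb_lim : Tendsto b atTop (𝓝 B)) :
    Tendsto (fun n => q (n + 1) / q n) atTop (𝓝 (dominantRoot A B)) := by
  set α := dominantRoot A B
  have hroot : α ^ 2 = A * α + B := dominantRoot_sq (by positivity)
  have hA_eq : α - (α - A) = A := sub_sub_cancel α A
  have hB_eq : α * (α - A) = B := by linear_combination hroot
  refine tendsto_of_perturbed_mobius (sub_pos.2 (lt_dominantRoot hB)) (sub_lt_self α hA)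
    (fun n => div_pos (hq_pos _) (hq_pos n)) ha hb (fun n => ?_)
    (hA_eq.symm ▸ (tendsto_add_atTop_iff_nat 2).2 ha_lim)
    (hB_eq.symm ▸ (tendsto_add_atTop_iff_nat 2).2 hb_lim)
  have h₁ := hq_pos (n + 1)
  rw [hq n]
  field_simp

theorem contraction_mem_Ioo (hq : IsThreeTermSolution a b q) (ha : ∀ n, 0 < a (n + 2))
    (hb : ∀ n, 0 < b (n + 2)) (hq_pos : ∀ n, 0 < q n) (n : ℕ) :
    b (n + 2) * q n / q (n + 2) ∈ Set.Ioo 0 1 := by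
  refine ⟨div_pos (mul_pos (hb n) (hq_pos n)) (hq_pos _), (div_lt_one (hq_pos _)).2 ?_⟩
  rw [hq n]
  exact lt_add_of_pos_left _ (mul_pos (ha n) (hq_pos _))

theorem tendsto_log_abs_limit_sub_convergent_div_nat (hp : IsThreeTermSolution a b p)
    (hq : IsThreeTermSolution a b q) (ha : ∀ n, 0 < a (n + 2)) (hb : ∀ n, 0 < b (n + 2))
    (hq_pos : ∀ n, 0 < q n) (hne : p 1 / q 1 ≠ p 0 / q 0) (hA : 0 < A) (hB : 0 < B)
    (ha_lim : Tendsto a atTop (𝓝 A)) (hb_lim : Tendsto b atTop (𝓝 B))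
    (hL : Tendsto (fun n => p n / q n) atTop (𝓝 L)) :
    Tendsto (fun n : ℕ => Real.log |L - p n / q n| / n) atTop
      (𝓝 (Real.log (B / dominantRoot A B ^ 2))) := by
  have hα := dominantRoot_pos (A := A) hB
  have hratio := hq.tendsto_ratio ha hb hq_pos hA hB ha_lim hb_lim
  have hcontraction : Tendsto (fun n => b (n + 2) * q n / q (n + 2)) atTop
      (𝓝 (B / dominantRoot A B ^ 2)) := by
    rw [sq]
    refine (((tendsto_add_atTop_iff_nat 2).2 hb_lim).div
      (hratio.mul ((tendsto_add_atTop_iff_nat 1).2 hratio)) (mul_pos hα hα).ne').congr fun n => ?_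
    have h₀ := hq_pos n
    have h₁ := hq_pos (n + 1)
    simp only [Pi.div_apply]
    field_simp
  exact tendsto_log_abs_limit_sub_div_nat (c := fun n => p n / q n)
    (hp.convergent_sub_eq_neg_mul_sub hq fun n => (hq_pos n).ne')
    (hq.contraction_mem_Ioo ha hb hq_pos)
    ⟨by positivity, div_dominantRoot_sq_lt_one hA hB⟩ hcontraction hne hL

end IsThreeTermSolution

section FactorialRescaling

theorem tendsto_eval_div_pow_natDegree {𝕜 : Type*} [NormedField 𝕜] [LinearOrder 𝕜]
    [IsStrictOrderedRing 𝕜] [OrderTopology 𝕜] (f : 𝕜[X]) :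
    Tendsto (fun x => f.eval x / x ^ f.natDegree) atTop (𝓝 f.leadingCoeff) := by
  refine (f.isEquivalent_atTop_lead.div (.refl (u := fun x => x ^ f.natDegree))).symm.tendsto_nhds
    (tendsto_const_nhds.congr' ?_)
  filter_upwards [eventually_gt_atTop 0] with x hx
  exact (mul_div_cancel_right₀ _ (pow_pos hx _).ne').symm

theorem tendsto_eval_natCast_div_pow_natDegree (f : ℤ[X]) :
    Tendsto (fun n : ℕ => ((f.eval (n : ℤ) : ℤ) : ℝ) / (n : ℝ) ^ f.natDegree) atTop
      (𝓝 (f.leadingCoeff : ℝ)) := by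
  have hinj : Function.Injective (Int.castRingHom ℝ) := Int.cast_injective
  have hlim := (tendsto_eval_div_pow_natDegree (f.map (Int.castRingHom ℝ))).comp
    tendsto_natCast_atTop_atTop
  rw [leadingCoeff_map_of_injective hinj, natDegree_map_eq_of_injective hinj] at hlim
  simpa only [Function.comp_def, eval_natCast_map, eq_intCast] using hlim

theorem tendsto_div_pow_mul_sub_one_pow {b : ℕ → ℝ} {B : ℝ} {d : ℕ}
    (hb : Tendsto (fun n : ℕ => b n / (n : ℝ) ^ (2 * d)) atTop (𝓝 B)) :
    Tendsto (fun n : ℕ => b n / ((n : ℝ) ^ d * ((n : ℝ) - 1) ^ d)) atTop (𝓝 B) := by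
  have hlim := hb.mul ((tendsto_natCast_div_add_atTop (-1 : ℝ)).pow d)
  rw [one_pow, mul_one] at hlim
  refine hlim.congr' ?_
  filter_upwards [eventually_gt_atTop 0] with n hn
  have hn' : (n : ℝ) ^ d ≠ 0 := by positivity
  rw [div_pow, div_mul_div_comm, two_mul, pow_add, ← sub_eq_add_neg, mul_right_comm,
    mul_div_mul_right _ _ hn']

variable {d : ℕ} {a b p q : ℕ → ℝ} {A B L : ℝ}

theorem div_pow_pos (ha : ∀ n, 0 < a (n + 2)) (n : ℕ) :
    0 < a (n + 2) / ((n + 2 : ℕ) : ℝ) ^ d :=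
  div_pos (ha n) (by positivity)

theorem div_pow_mul_sub_one_pow_pos (hb : ∀ n, 0 < b (n + 2)) (n : ℕ) :
    0 < b (n + 2) / (((n + 2 : ℕ) : ℝ) ^ d * (((n + 2 : ℕ) : ℝ) - 1) ^ d) := by
  have hsub : (0 : ℝ) < ((n + 2 : ℕ) : ℝ) - 1 := by
    push_cast
    linarith [n.cast_nonneg (α := ℝ)]
  exact div_pos (hb n) (by positivity)

namespace IsThreeTermSolution

theorem tendsto_log_div_factorial_pow_div_nat (hq : IsThreeTermSolution a b q)
    (ha : ∀ n, 0 < a (n + 2)) (hb : ∀ n, 0 < b (n + 2)) (hq_pos : ∀ n, 0 < q n)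
    (hA : 0 < A) (hB : 0 < B)
    (ha_lim : Tendsto (fun n : ℕ => a n / (n : ℝ) ^ d) atTop (𝓝 A))
    (hb_lim : Tendsto (fun n : ℕ => b n / (n : ℝ) ^ (2 * d)) atTop (𝓝 B)) :
    Tendsto (fun n : ℕ => Real.log (q n / (n.factorial : ℝ) ^ d) / n) atTop
      (𝓝 (Real.log (dominantRoot A B))) := by
  have hrescaled_pos : ∀ n, 0 < q n / (n.factorial : ℝ) ^ d := fun n =>
    div_pos (hq_pos n) (by positivity)
  exact tendsto_log_div_nat_of_tendsto_ratio (dominantRoot_pos hB).ne'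
    (fun n => (hrescaled_pos n).ne')
    ((hq.div_factorial_pow d).tendsto_ratio (div_pow_pos ha) (div_pow_mul_sub_one_pow_pos hb)
      hrescaled_pos hA hB ha_lim (tendsto_div_pow_mul_sub_one_pow hb_lim))

theorem tendsto_log_abs_limit_sub_convergent_div_nat_of_pow (hp : IsThreeTermSolution a b p)
    (hq : IsThreeTermSolution a b q) (ha : ∀ n, 0 < a (n + 2)) (hb : ∀ n, 0 < b (n + 2))
    (hq_pos : ∀ n, 0 < q n) (hne : p 1 / q 1 ≠ p 0 / q 0) (hA : 0 < A) (hB : 0 < B)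
    (ha_lim : Tendsto (fun n : ℕ => a n / (n : ℝ) ^ d) atTop (𝓝 A))
    (hb_lim : Tendsto (fun n : ℕ => b n / (n : ℝ) ^ (2 * d)) atTop (𝓝 B))
    (hL : Tendsto (fun n => p n / q n) atTop (𝓝 L)) :
    Tendsto (fun n : ℕ => Real.log |L - p n / q n| / n) atTop
      (𝓝 (Real.log (B / dominantRoot A B ^ 2))) := by
  have hconv : ∀ n : ℕ, p n / (n.factorial : ℝ) ^ d / (q n / (n.factorial : ℝ) ^ d) =
      p n / q n := fun n => div_div_div_cancel_right₀ (by positivity) _ _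
  have := (hp.div_factorial_pow d).tendsto_log_abs_limit_sub_convergent_div_nat
    (hq.div_factorial_pow d) (div_pow_pos ha) (div_pow_mul_sub_one_pow_pos hb)
    (fun n => div_pos (hq_pos n) (by positivity)) (by simpa only [hconv] using hne) hA hB ha_lim
    (tendsto_div_pow_mul_sub_one_pow hb_lim) (by simpa only [hconv] using hL)
  simpa only [hconv] using this

end IsThreeTermSolution

end FactorialRescaling

theorem one_add_div_eq_neg_log_div {α B lam : ℝ} (hα : α ≠ 0) (hB : B ≠ 0)
    (hne : Real.log α - Real.log lam ≠ 0) :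
    1 + (Real.log α - Real.log B + Real.log lam) / (Real.log α - Real.log lam) =
      -Real.log (B / α ^ 2) / (Real.log α - Real.log lam) := by
  rw [Real.log_div hB (pow_ne_zero 2 hα), Real.log_pow]
  field_simp
  push_cast
  ring

theorem stmt_1_general {d : ℕ} {a b p q g : ℕ → ℝ} {A B L lam : ℝ} (hA : 0 < A) (hB : 0 < B)
    (ha : ∀ n, 0 < a (n + 2)) (hb : ∀ n, 0 < b (n + 2))
    (ha_lim : Tendsto (fun n : ℕ => a n / (n : ℝ) ^ d) atTop (𝓝 A))
    (hb_lim : Tendsto (fun n : ℕ => b n / (n : ℝ) ^ (2 * d)) atTop (𝓝 B))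
    (hp : IsThreeTermSolution a b p) (hq : IsThreeTermSolution a b q)
    (hq_zero : 0 < q 0) (hq_one : 0 < q 1) (hindep : p 1 * q 0 ≠ p 0 * q 1)
    (hL : Tendsto (fun n => p n / q n) atTop (𝓝 L)) (hg : ∀ n, 0 < g n)
    (hlam_pos : 0 < lam) (hlam_lt : lam < dominantRoot A B)
    (hlam : Tendsto (fun n : ℕ => Real.log (g n / (n.factorial : ℝ) ^ d) / n) atTop
      (𝓝 (Real.log lam))) :
    Tendsto (fun n => -Real.log |L - p n / q n| / Real.log (q n / g n)) atTop
      (𝓝 (1 + (Real.log (dominantRoot A B) - Real.log B + Real.log lam) /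
        (Real.log (dominantRoot A B) - Real.log lam))) := by
  have hq_pos := hq.pos ha hb hq_zero hq_one
  have hα := dominantRoot_pos (A := A) hB
  have hne : p 1 / q 1 ≠ p 0 / q 0 := fun h => hindep ((div_eq_div_iff hq_one.ne' hq_zero.ne').1 h)
  have hreduced : Tendsto (fun n : ℕ => Real.log (q n / g n) / n) atTop
      (𝓝 (Real.log (dominantRoot A B) - Real.log lam)) := by
    refine ((hq.tendsto_log_div_factorial_pow_div_nat ha hb hq_pos hA hB ha_lim hb_lim).sub
      hlam).congr fun n => ?_
    have hfact : (n.factorial : ℝ) ^ d ≠ 0 := by positivity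
    rw [Real.log_div (hq_pos n).ne' hfact, Real.log_div (hg n).ne' hfact,
      Real.log_div (hq_pos n).ne' (hg n).ne']
    ring
  have herror := hp.tendsto_log_abs_limit_sub_convergent_div_nat_of_pow hq ha hb hq_pos hne hA hB
    ha_lim hb_lim hL
  have hne_zero : Real.log (dominantRoot A B) - Real.log lam ≠ 0 :=
    (sub_pos.2 (Real.log_lt_log hlam_pos hlam_lt)).ne'
  rw [one_add_div_eq_neg_log_div hα.ne' hB.ne' hne_zero]
  refine (herror.neg.div hreduced hne_zero).congr' ?_
  filter_upwards [eventually_ne_atTop 0] with n hn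
  rw [Pi.div_apply, ← neg_div, div_div_div_cancel_right₀ (Nat.cast_ne_zero.2 hn)]

/-- Theorem 2, formula for δ.
For a balanced-degree PCF with factorial reduction of exponential order `λ` with
`0 < λ < α`, the effective irrationality measure equals
`δ = (ln α − ln B + ln λ)/(ln α − ln λ)`, in the sense that
`(−ln|L − pₙ/qₙ|)/ln(qₙ/gcd(pₙ,qₙ)) → 1 + δ`. -/
theorem stmt_1 (d : ℕ) (hd : 1 ≤ d) (a b : Polynomial ℤ)
    (hda : a.natDegree = d) (hdb : b.natDegree = 2 * d)
    (hA : 0 < a.leadingCoeff) (hB : 0 < b.leadingCoeff)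
    (hapos : ∀ n : ℕ, 1 ≤ n → 0 < a.eval (n : ℤ))
    (hbpos : ∀ n : ℕ, 1 ≤ n → 0 < b.eval (n : ℤ))
    (p q : ℕ → ℤ)
    (hp0 : p 0 = a.eval 0) (hq0 : q 0 = 1)
    (hp1 : p 1 = a.eval 1 * p 0 + b.eval 1 * 1)
    (hq1 : q 1 = a.eval 1 * q 0 + b.eval 1 * 0)
    (hprec : ∀ n : ℕ, p (n + 2) = a.eval ((n : ℤ) + 2) * p (n + 1) + b.eval ((n : ℤ) + 2) * p n)
    (hqrec : ∀ n : ℕ, q (n + 2) = a.eval ((n : ℤ) + 2) * q (n + 1) + b.eval ((n : ℤ) + 2) * q n)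
    (L : ℝ)
    (hL : Tendsto (fun n : ℕ => (p n : ℝ) / (q n : ℝ)) atTop (nhds L))
    (α : ℝ)
    (hα : α = ((a.leadingCoeff : ℝ) +
      Real.sqrt ((a.leadingCoeff : ℝ) ^ 2 + 4 * (b.leadingCoeff : ℝ))) / 2)
    (lam : ℝ) (hlam_pos : 0 < lam) (hlam_lt : lam < α)
    (hlam : Tendsto (fun n : ℕ =>
        (1 : ℝ) / n * Real.log ((Int.gcd (p n) (q n) : ℝ) / (Nat.factorial n : ℝ) ^ d))
        atTop (nhds (Real.log lam))) :
    Tendsto (fun n : ℕ =>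
        (-Real.log |L - (p n : ℝ) / (q n : ℝ)|) /
          Real.log ((q n : ℝ) / (Int.gcd (p n) (q n) : ℝ)))
      atTop
      (nhds (1 + (Real.log α - Real.log (b.leadingCoeff : ℝ) + Real.log lam) /
        (Real.log α - Real.log lam))) := by
  subst hα hda
  have hp : IsThreeTermSolution (fun n : ℕ => a.eval (n : ℤ)) (fun n : ℕ => b.eval (n : ℤ)) p :=
    hprec
  have hq : IsThreeTermSolution (fun n : ℕ => a.eval (n : ℤ)) (fun n : ℕ => b.eval (n : ℤ)) q :=
    hqrec
  have ha_one : 0 < a.eval 1 := mod_cast hapos 1 le_rfl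
  have hb_one : 0 < b.eval 1 := mod_cast hbpos 1 le_rfl
  have hq1_pos : 0 < q 1 := by simpa [hq1, hq0] using ha_one
  have hq_pos := hq.pos (fun n => hapos (n + 2) (by lia)) (fun n => hbpos (n + 2) (by lia))
    (hq0 ▸ one_pos) hq1_pos
  have hindep : p 1 * q 0 ≠ p 0 * q 1 := by
    rw [hp1, hq1, hq0]
    linarith
  exact stmt_1_general (mod_cast hA) (mod_cast hB)
    (fun n => Int.cast_pos.2 (hapos (n + 2) (by lia)))
    (fun n => Int.cast_pos.2 (hbpos (n + 2) (by lia)))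
    (tendsto_eval_natCast_div_pow_natDegree a) (hdb ▸ tendsto_eval_natCast_div_pow_natDegree b)
    (hp.map (Int.castRingHom ℝ)) (hq.map (Int.castRingHom ℝ)) (Int.cast_pos.2 (hq_pos 0))
    (Int.cast_pos.2 (hq_pos 1)) (mod_cast hindep) hL
    (fun n => Nat.cast_pos.2 (Int.gcd_pos_of_ne_zero_right _ (hq_pos n).ne')) hlam_pos hlam_lt
    (by simpa only [one_div_mul_eq_div] using hlam)
end

section
/- Let a, b ∈ ℤ[X] satisfy a(X) + a(−1−X) = 0 and b(X) = b(−X) as polynomial identities, and b(0) = 0. Let (u_n)_{n ≥ −1} be any integer sequence satisfying u_n = a(n)·u_{n−1} + b(n)·u_{n−2} for all n ≥ 1. Then for every odd prime r, r divides u_n for all n ≥ 2r − 1. -/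
open Polynomial

/-!
Modulo an odd `r` the coefficient sequences `A k = a(k)` and `B k = b(k)` have period `r`. Since
`B 0 = 0`, the recursion forgets `u (N - 2)` at every positive multiple `N` of `r`, so
`u (N - 1 + n) = K n * u (N - 1)`, where `K n` is the `n`-th continuant of `A` and `B`.
Continuants are invariant under reversal of the coefficients; by symmetry and periodicity,
reversal replaces `A 0, …, A (r - 1)` by its negative and fixes `B 1, …, B (r - 1)`. Hence
`K r = (-1) ^ r * K r = -K r`, so that `K r = 0` and `u (2 * r - 1) = 0`. Taking `N = 2 * r`
then gives the vanishing of all later terms.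
-/

section Recursion

variable {S : Type*}

/-- The continuant with diagonal entries `A 0, …, A (n - 1)` and off-diagonal entries
`B 1, …, B (n - 1)`: the numerator of `A 0 + B 1 / (A 1 + ⋯ + B (n - 1) / A (n - 1))`.
The coefficients are indexed by `ℤ` so that they can be reflected without truncated subtraction. -/
def continuant [Semiring S] (A B : ℤ → S) : ℕ → S
  | 0 => 1
  | 1 => A 0
  | n + 2 => A (n + 1) * continuant A B (n + 1) + B (n + 1) * continuant A B n

theorem continuant_add_two_left [CommSemiring S] (A B : ℤ → S) (n : ℕ) :
    continuant A B (n + 2) =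
      A 0 * continuant (fun k => A (k + 1)) (fun k => B (k + 1)) (n + 1) +
        B 1 * continuant (fun k => A (k + 2)) (fun k => B (k + 2)) n := by
  induction n using Nat.twoStepInduction with
  | zero => simp [continuant, mul_comm]
  | one => simp [continuant, one_add_one_eq_two]; ring
  | more n ih₀ ih₁ =>
    rw [continuant, ih₀, ih₁, continuant.eq_3 (fun k => A (k + 1)) _ (n + 1),
      continuant.eq_3 (fun k => A (k + 2)) _ n]
    push_cast
    ring_nf

theorem continuant_reverse [CommSemiring S] (A B : ℤ → S) (n : ℕ) :
    continuant (fun k => A (n - 1 - k)) (fun k => B (n - k)) n = continuant A B n := by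
  induction n using Nat.twoStepInduction generalizing A B with
  | zero => rfl
  | one => simp [continuant]
  | more n ih₀ ih₁ =>
    rw [continuant_add_two_left A B, ← ih₀, ← ih₁, continuant]
    push_cast
    ring_nf

theorem continuant_neg_left [CommRing S] (A B : ℤ → S) (n : ℕ) :
    continuant (-A) B n = (-1) ^ n * continuant A B n := by
  induction n using Nat.twoStepInduction with
  | zero => simp [continuant]
  | one => simp [continuant]
  | more n ih₀ ih₁ =>
    simp only [continuant, ih₀, ih₁, Pi.neg_apply]
    ring

theorem continuant_eq_zero_of_odd [CommRing S] {A B : ℤ → S} {n : ℕ} (hn : Odd n)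
    (h2 : IsLeftRegular (2 : S)) (hA : ∀ k, A (n - 1 - k) = -A k) (hB : ∀ k, B (n - k) = B k) :
    continuant A B n = 0 := by
  have hneg : continuant A B n = -continuant A B n :=
    calc continuant A B n
        = continuant (fun k => A (n - 1 - k)) (fun k => B (n - k)) n :=
          (continuant_reverse A B n).symm
      _ = continuant (-A) B n := by congr 1 <;> funext k <;> simp only [hA, hB, Pi.neg_apply]
      _ = -continuant A B n := by rw [continuant_neg_left, hn.neg_one_pow, neg_one_mul]
  exact h2 (by linear_combination hneg)

/-- The recursion of a polynomial continued fraction (PCF), for coefficient sequences that need not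
be polynomial. The initial values `u (-1)` and `u 0` are arbitrary; the values of `u` below `-1`
carry no meaning. -/
def IsPCFSolution [Semiring S] (A B u : ℤ → S) : Prop :=
  ∀ n : ℤ, 1 ≤ n → u n = A n * u (n - 1) + B n * u (n - 2)

theorem IsPCFSolution.eq_continuant_mul [Semiring S] {A B u : ℤ → S}
    (hu : IsPCFSolution A B u) {N : ℤ} (hN : 1 ≤ N) (hA : A.Periodic N) (hB : B.Periodic N)
    (hB0 : B 0 = 0) (n : ℕ) : u (N - 1 + n) = continuant A B n * u (N - 1) := by
  induction n using Nat.twoStepInduction with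
  | zero => simp [continuant]
  | one => simp [continuant, hu N hN, hA.eq, hB.eq, hB0]
  | more n ih₀ ih₁ =>
    have hindex : N - 1 + (n + 2 : ℕ) = (n + 1) + N := by push_cast; ring
    have hpred : (n + 1 : ℤ) + N - 1 = N - 1 + (n + 1 : ℕ) := by push_cast; ring
    have hpred₂ : (n + 1 : ℤ) + N - 2 = N - 1 + n := by ring
    rw [hindex, hu _ (by lia), hA, hB, hpred, hpred₂, ih₀, ih₁, continuant]
    simp only [add_mul, mul_assoc]

theorem IsPCFSolution.eq_zero_of_periodic [CommRing S] {A B u : ℤ → S}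
    (hu : IsPCFSolution A B u) {r : ℕ} (hr : Odd r) (h2 : IsLeftRegular (2 : S))
    (hAr : A.Periodic r) (hBr : B.Periodic r) (hA : ∀ k, A (-1 - k) = -A k)
    (hB : ∀ k, B (-k) = B k) (hB0 : B 0 = 0) {n : ℤ} (hn : 2 * (r : ℤ) - 1 ≤ n) : u n = 0 := by
  have hr1 : (1 : ℤ) ≤ r := mod_cast hr.pos
  have hcont : continuant A B r = 0 := by
    refine continuant_eq_zero_of_odd hr h2 (fun k => ?_) (fun k => ?_)
    · rw [← hA, ← hAr (-1 - k)]; ring_nf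
    · rw [← hB k, ← hBr (-k)]; ring_nf
  have hlast : u (2 * r - 1) = 0 := by
    have h := hu.eq_continuant_mul hr1 hAr hBr hB0 r
    rwa [hcont, zero_mul, show (r : ℤ) - 1 + r = 2 * r - 1 by ring] at h
  obtain ⟨m, rfl⟩ := Int.le.dest hn
  have hrestart := hu.eq_continuant_mul (N := 2 * r) (by lia) (hAr.nat_mul 2) (hBr.nat_mul 2) hB0 m
  rw [hrestart, hlast, mul_zero]

end Recursion

theorem isLeftRegular_two_of_odd_natCast_eq_zero {S : Type*} [CommRing S] {r : ℕ} (hr : Odd r)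
    (hr0 : (r : S) = 0) : IsLeftRegular (2 : S) := by
  obtain ⟨k, rfl⟩ := hr
  push_cast at hr0
  exact (IsUnit.of_mul_eq_one (k + 1 : S) (by linear_combination hr0)).isRegular.left

theorem periodic_map_eval_intCast {R S : Type*} [CommRing R] [CommRing S] (f : R →+* S)
    (p : R[X]) {r : ℕ} (hr0 : (r : S) = 0) :
    Function.Periodic (fun k : ℤ => f (p.eval (k : R))) (r : ℤ) := by
  intro k
  beta_reduce
  rw [← eval_intCast_map, ← eval_intCast_map, Int.cast_add, Int.cast_natCast, hr0, add_zero]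

theorem stmt_7_general {R : Type*} [CommRing R] (a b : R[X])
    (ha : a + a.comp (-1 - X) = 0) (hb : b.comp (-X) = b) (hb0 : b.eval 0 = 0) (u : ℤ → R)
    (hrec : ∀ n : ℤ, 1 ≤ n → u n = a.eval (n : R) * u (n - 1) + b.eval (n : R) * u (n - 2))
    {r : ℕ} (hr : Odd r) {n : ℤ} (hn : 2 * (r : ℤ) - 1 ≤ n) : (r : R) ∣ u n := by
  let f := Ideal.Quotient.mk (Ideal.span {(r : R)})
  have hr0 : (r : R ⧸ Ideal.span {(r : R)}) = 0 := by
    rw [← map_natCast f, Ideal.Quotient.eq_zero_iff_dvd]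
  have ha_eval (x : R) : a.eval (-1 - x) = -a.eval x := by
    have h := congrArg (eval x) ha
    simp only [eval_add, eval_comp, eval_sub, eval_neg, eval_one, eval_X, eval_zero] at h
    exact eq_neg_of_add_eq_zero_right h
  have hb_eval (x : R) : b.eval (-x) = b.eval x := by
    simpa only [eval_comp, eval_neg, eval_X] using congrArg (eval x) hb
  have hu : IsPCFSolution (fun k => f (a.eval (k : R))) (fun k => f (b.eval (k : R)))
      (fun k => f (u k)) := fun n hn => by simp only [hrec n hn, map_add, map_mul]
  exact (Ideal.Quotient.eq_zero_iff_dvd _ _).1 <|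
    hu.eq_zero_of_periodic hr (isLeftRegular_two_of_odd_natCast_eq_zero hr hr0)
      (periodic_map_eval_intCast f a hr0) (periodic_map_eval_intCast f b hr0)
      (by simp [ha_eval]) (by simp [hb_eval]) (by simp [hb0]) hn

/-- key step of Theorem 5.
If `a(X) + a(−1−X) = 0`, `b(X) = b(−X)` as polynomial identities, and `b(0) = 0`,
then for any integer sequence `u` (indexed by `ℤ`, with arbitrary values `u₋₁, u₀`)
satisfying `u_n = a(n)·u_{n−1} + b(n)·u_{n−2}` for all `n ≥ 1`, every odd prime `r`
divides `u_n` for all `n ≥ 2r − 1`. -/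
theorem stmt_7 (a b : Polynomial ℤ)
    (ha : a + a.comp (-1 - Polynomial.X) = 0)
    (hb : b.comp (-Polynomial.X) = b)
    (hb0 : b.eval 0 = 0)
    (u : ℤ → ℤ)
    (hrec : ∀ n : ℤ, 1 ≤ n → u n = a.eval n * u (n - 1) + b.eval n * u (n - 2)) :
    ∀ r : ℕ, r.Prime → Odd r → ∀ n : ℤ, 2 * (r : ℤ) - 1 ≤ n → (r : ℤ) ∣ u n := by
  intro r _ hr n hn
  exact stmt_7_general a b ha hb hb0 u (by simpa only [Int.cast_id] using hrec) hr hn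
end

section
/- Let a, b ∈ ℤ[X] satisfy a(X) + a(−1−X) = 0 and b(X) = b(−X) as polynomial identities, and b(0) = 0. Let r = 2h + 1 be an odd prime and let (u_n)_{n ≥ −1} be any integer sequence satisfying u_n = a(n)·u_{n−1} + b(n)·u_{n−2} for all n ≥ 1. Then for every integer m with −1 ≤ m ≤ h − 1, u_{h+m} ≡ u_{h−m−2} · ∏_{j=h−m}^{h} b(j) (mod r), where the product is empty (equal to 1) when m = −1. -/
open Polynomial

/-!
In a ring where `2h + 1 = 0`, the identity for `a` says that the coefficients `a n` are odd under
the reflection `n ↦ 2h - n`, and the identity for `b` that the `b n` are invariant under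
`n ↦ 2h + 1 - n`. Oddness at the fixed point `h` gives `a h = 0`, because `2` is invertible.
Run forwards at `h + m` and backwards at `h - m`, the recursion then takes the same form, up to a
rescaling by the product of the `b j`.
-/

theorem prod_Icc_eq_mul_prod_Icc_add_one {α M : Type*} [LinearOrder α] [LocallyFiniteOrder α]
    [One α] [Add α] [SuccAddOrder α] [NoMaxOrder α] [CommMonoid M] (f : α → M) {c d : α}
    (hcd : c ≤ d) : ∏ j ∈ Finset.Icc c d, f j = f c * ∏ j ∈ Finset.Icc (c + 1) d, f j := by
  rw [← Finset.mul_prod_Ioc_eq_prod_Icc hcd, Finset.Icc_add_one_left_eq_Ioc]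

theorem eq_mul_prod_of_reflected_recurrence {R : Type*} [CommRing R] {a b u : ℤ → R} {h : ℤ}
    (ha_mid : a h = 0) (ha : ∀ n, a (2 * h - n) = -a n) (hb : ∀ n, b (2 * h + 1 - n) = b n)
    (m : ℤ) (hm : -1 ≤ m) (hrec : ∀ n, h - m ≤ n → u n = a n * u (n - 1) + b n * u (n - 2)) :
    u (h + m) = u (h - m - 2) * ∏ j ∈ Finset.Icc (h - m) h, b j := by
  obtain rfl | rfl | hm_pos : m = -1 ∨ m = 0 ∨ 1 ≤ m := by omega
  · rw [Finset.Icc_eq_empty (by omega), Finset.prod_empty, mul_one]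
    congr 1
    ring
  · simp [hrec h (by simp), ha_mid, mul_comm]
  · have ih₁ : u (h + m - 1) = u (h - m - 1) * ∏ j ∈ Finset.Icc (h - m + 1) h, b j := by
      convert eq_mul_prod_of_reflected_recurrence ha_mid ha hb (m - 1) (by omega)
        (fun n hn ↦ hrec n (by omega)) using 3 <;> ring_nf
    have ih₂ : u (h + m - 2) = u (h - m) * ∏ j ∈ Finset.Icc (h - m + 2) h, b j := by
      convert eq_mul_prod_of_reflected_recurrence ha_mid ha hb (m - 2) (by omega)
        (fun n hn ↦ hrec n (by omega)) using 3 <;> ring_nf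
    have ha_refl : a (h + m) = -a (h - m) := by
      rw [← ha]
      congr 1
      ring
    have hb_refl : b (h + m) = b (h - m + 1) := by
      rw [← hb]
      congr 1
      ring
    have hprod : ∏ j ∈ Finset.Icc (h - m + 1) h, b j =
        b (h - m + 1) * ∏ j ∈ Finset.Icc (h - m + 2) h, b j := by
      rw [prod_Icc_eq_mul_prod_Icc_add_one b (by omega), add_assoc, one_add_one_eq_two]
    calc u (h + m)
        = a (h + m) * u (h + m - 1) + b (h + m) * u (h + m - 2) := hrec _ (by omega)
      _ = (u (h - m) - a (h - m) * u (h - m - 1)) * ∏ j ∈ Finset.Icc (h - m + 1) h, b j := by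
        rw [ha_refl, hb_refl, ih₁, ih₂, hprod]
        ring
      _ = u (h - m - 2) * (b (h - m) * ∏ j ∈ Finset.Icc (h - m + 1) h, b j) := by
        rw [hrec (h - m) le_rfl]
        ring
      _ = u (h - m - 2) * ∏ j ∈ Finset.Icc (h - m) h, b j := by
        rw [← prod_Icc_eq_mul_prod_Icc_add_one b (by omega)]
termination_by (m + 1).toNat

section Aeval

variable {S R : Type*} [CommRing S] [CommRing R] [Algebra S R] {p : S[X]}

theorem aeval_neg_one_sub_eq_neg (hp : p + p.comp (-1 - X) = 0) (x : R) :
    aeval (-1 - x) p = -aeval x p := by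
  have h := congrArg (aeval x) hp
  simp only [map_add, aeval_comp, map_sub, map_neg, map_one, aeval_X, map_zero] at h
  exact eq_neg_of_add_eq_zero_right h

theorem aeval_eq_zero_of_two_mul_add_one_eq_zero (hp : p + p.comp (-1 - X) = 0) {x : R}
    (hx : 2 * x + 1 = 0) : aeval x p = 0 := by
  have hodd : aeval x p = -aeval x p := by
    rw [← aeval_neg_one_sub_eq_neg hp]
    congr 2
    linear_combination hx
  linear_combination aeval x p * hx - x * hodd

theorem aeval_neg_eq (hp : p.comp (-X) = p) (x : R) : aeval (-x) p = aeval x p := by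
  conv_rhs => rw [← hp, aeval_comp, map_neg, aeval_X]

theorem aeval_intCast_eq_intCast_eval (q : ℤ[X]) (n : ℤ) :
    aeval (n : R) q = ((q.eval n : ℤ) : R) :=
  eval₂_at_intCast _ n

end Aeval

theorem stmt_8_general {S R : Type*} [CommRing S] [CommRing R] [Algebra S R] (a b : S[X])
    (ha : a + a.comp (-1 - X) = 0) (hb : b.comp (-X) = b)
    (h : ℤ) (hh : 2 * (h : R) + 1 = 0) (u : ℤ → R)
    (hrec : ∀ n : ℤ, 1 ≤ n →
      u n = aeval (n : R) a * u (n - 1) + aeval (n : R) b * u (n - 2)) :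
    ∀ m : ℤ, -1 ≤ m → m ≤ h - 1 →
      u (h + m) = u (h - m - 2) * ∏ j ∈ Finset.Icc (h - m) h, aeval (j : R) b := by
  intro m hm hmh
  refine eq_mul_prod_of_reflected_recurrence
    (a := fun n ↦ aeval (n : R) a) (b := fun n ↦ aeval (n : R) b)
    (aeval_eq_zero_of_two_mul_add_one_eq_zero ha hh) (fun n ↦ ?_) (fun n ↦ ?_) m hm
    (fun n hn ↦ hrec n (by omega))
  · have hn : ((2 * h - n : ℤ) : R) = -1 - n := by
      push_cast
      linear_combination hh
    rw [hn, aeval_neg_one_sub_eq_neg ha]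
  · have hn : ((2 * h + 1 - n : ℤ) : R) = -n := by
      push_cast
      linear_combination hh
    rw [hn, aeval_neg_eq hb]

/-- the induction inside Theorem 5.
Let `r = 2h + 1` be an odd prime, `a(X) + a(−1−X) = 0`, `b(X) = b(−X)`, `b(0) = 0`,
and let `u : ℤ → ℤ` (arbitrary values `u₋₁, u₀`) satisfy
`u_n = a(n)·u_{n−1} + b(n)·u_{n−2}` for all `n ≥ 1`. Then for every integer `m`
with `−1 ≤ m ≤ h − 1`,
`u_{h+m} ≡ u_{h−m−2} · ∏_{j=h−m}^{h} b(j) (mod r)`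
(the product being empty, i.e. `1`, when `m = −1`). -/
theorem stmt_8 (a b : Polynomial ℤ)
    (ha : a + a.comp (-1 - Polynomial.X) = 0)
    (hb : b.comp (-Polynomial.X) = b)
    (hb0 : b.eval 0 = 0)
    (r h : ℕ) (hr : r.Prime) (hrh : r = 2 * h + 1)
    (u : ℤ → ℤ)
    (hrec : ∀ n : ℤ, 1 ≤ n → u n = a.eval n * u (n - 1) + b.eval n * u (n - 2)) :
    ∀ m : ℤ, -1 ≤ m → m ≤ (h : ℤ) - 1 →
      u ((h : ℤ) + m) ≡
        u ((h : ℤ) - m - 2) * (∏ j ∈ Finset.Icc ((h : ℤ) - m) (h : ℤ), b.eval j)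
        [ZMOD (r : ℤ)] := by
  intro m hm hmh
  have hr0 : 2 * ((h : ℤ) : ZMod r) + 1 = 0 := by simpa [hrh] using ZMod.natCast_self r
  simpa [← ZMod.intCast_eq_intCast_iff, aeval_intCast_eq_intCast_eval] using
    stmt_8_general a b ha hb h hr0 (fun n ↦ (u n : ZMod r))
      (fun n hn ↦ by simp [hrec n hn, aeval_intCast_eq_intCast_eval]) m hm hmh
end

section
/- Fix a positive integer k and let a(n) = k·(2n + 1) and b(n) = −n². Let p, q be the convergents of PCF[a,b]. Then for every n ≥ 1, n!/lcm(1,2,…,n) divides 2^n · gcd(p_n, q_n). -/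
/-! Put `A n = 2 ^ n * P n k`, with `P n` the Legendre polynomials. The series `G = ∑ A n * X ^ n`
is `(1 - 4 * k * X + 4 * X ^ 2) ^ (-1/2) = (1 - 4 * y) ^ (-1/2)` for `y = X * (k - X)`, so it is
integral and congruent to `1` modulo `2`. It solves a homogeneous first order differential equation,
and its product `G * J` with its antiderivative `J` solves the same equation with right-hand side
`1`. Comparing coefficients turns these equations into the recurrence of the convergents, whence
`2 ^ (n + 1) * p n = (n + 1)! * A (n + 1)` and
`2 ^ n * q n = ∑ i + j = n, (n + 1)! / (j + 1) * A i * A j`. -/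

open PowerSeries
open Nat (lcmUpto lcmUpto_dvd_factorial)
open Finset.HasAntidiagonal (antidiagonal antidiagonal.snd_le)
open scoped Nat

section CommRing

variable {R : Type*} [CommRing R]

theorem exists_sq_mul_add_one_eq {y : R⟦X⟧} (hy : constantCoeff y = 0) :
    ∃ c : R⟦X⟧, c ^ 2 * y + 1 = c := by
  have hsubst : HasSubst y := HasSubst.of_constantCoeff_zero' hy
  set catalanR : R⟦X⟧ := catalanSeries.map (Nat.castRingHom R)
  have hcatalan : catalanR ^ 2 * X + 1 = catalanR := by
    simpa using congrArg (PowerSeries.map (Nat.castRingHom R)) catalanSeries_sq_mul_X_add_one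
  refine ⟨catalanR.subst y, ?_⟩
  simpa only [map_add, map_mul, map_pow, map_one, substAlgHom_X, coe_substAlgHom]
    using congrArg (substAlgHom (R := R) hsubst) hcatalan

theorem exists_one_sub_four_mul_mul_sq_eq_one {y : R⟦X⟧} (hy : constantCoeff y = 0) :
    ∃ F : R⟦X⟧, constantCoeff F = 0 ∧ (1 - 4 * y) * (1 + 2 * F) ^ 2 = 1 := by
  obtain ⟨c, hc⟩ := exists_sq_mul_add_one_eq hy
  -- `1 - 2 * y * c` is the square root of `1 - 4 * y`, by the quadratic formula.
  have hsq : (1 - 2 * y * c) ^ 2 = 1 - 4 * y := by linear_combination 4 * y * hc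
  obtain ⟨g, hg⟩ : ∃ g, (1 - 2 * y * c) * g = 1 :=
    ⟨_, mul_invOfUnit _ 1 (by simp [hy])⟩
  have hFg : 1 + 2 * (y * c * g) = g := by linear_combination -hg
  exact ⟨y * c * g, by simp [hy], by rw [hFg, ← hsq, ← mul_pow, hg, one_pow]⟩

/-- The polynomial `1 - 4kX + 4X²`, as a power series. Its inverse square root is the generating
function of the values `2ⁿ Pₙ(k)`, where `Pₙ` is the `n`-th Legendre polynomial. -/
noncomputable def legendreQuadratic (k : R) : R⟦X⟧ := 1 - 4 * (C k * X) + 4 * X ^ 2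

theorem exists_legendreQuadratic_mul_sq_eq_one (k : R) :
    ∃ F : R⟦X⟧, constantCoeff F = 0 ∧ legendreQuadratic k * (1 + 2 * F) ^ 2 = 1 := by
  have hQ : legendreQuadratic k = 1 - 4 * (X * (C k - X)) := by
    rw [legendreQuadratic]
    ring
  rw [hQ]
  exact exists_one_sub_four_mul_mul_sq_eq_one (by simp)

theorem derivative_legendreQuadratic (k : R) :
    d⁄dX R (legendreQuadratic k) = -(4 * (C k - 2 * X)) := by
  have h4 : d⁄dX R (4 : R⟦X⟧) = 0 := (d⁄dX R).map_natCast 4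
  simp only [legendreQuadratic, sq, map_add, map_sub, Derivation.leibniz, h4,
    Derivation.map_one_eq_zero, derivative_C, derivative_X, smul_eq_mul]
  ring

theorem coeff_one_of_legendreQuadratic_mul_derivative {k e : R} {H : R⟦X⟧}
    (hH : legendreQuadratic k * d⁄dX R H = 2 * (C k - 2 * X) * H + C e) :
    coeff 1 H = 2 * k * coeff 0 H + e := by
  have hderiv : constantCoeff (d⁄dX R H) = coeff 1 H := by
    simp [← coeff_zero_eq_constantCoeff_apply, coeff_derivative]
  simpa [legendreQuadratic, hderiv, map_ofNat] using congrArg constantCoeff hH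

theorem coeff_add_two_of_legendreQuadratic_mul_derivative {k e : R} {H : R⟦X⟧}
    (hH : legendreQuadratic k * d⁄dX R H = 2 * (C k - 2 * X) * H + C e) (n : ℕ) :
    (n + 2) * coeff (n + 2) H =
      2 * k * (2 * n + 3) * coeff (n + 1) H - 4 * (n + 1) * coeff n H := by
  have hH' : d⁄dX R H = C (4 * k) * (X * d⁄dX R H) - C 4 * (X * (X * d⁄dX R H))
      + C (2 * k) * H - C 4 * (X * H) + C e := by
    simp only [legendreQuadratic, map_mul, map_ofNat] at hH ⊢
    linear_combination hH
  have hcoeff := congrArg (coeff (n + 1)) hH'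
  simp only [map_add, map_sub, coeff_C_mul, coeff_succ_X_mul, coeff_derivative,
    coeff_C_of_ne_zero n.succ_ne_zero] at hcoeff
  rcases n with _ | n
  · simp only [coeff_zero_X_mul] at hcoeff
    push_cast at hcoeff ⊢
    linear_combination hcoeff
  · simp only [coeff_succ_X_mul, coeff_derivative] at hcoeff
    push_cast at hcoeff ⊢
    linear_combination hcoeff

theorem two_pow_succ_mul_eq_factorial_mul_coeff {k e : R} {H : R⟦X⟧} {u : ℕ → R}
    (hH : legendreQuadratic k * d⁄dX R H = 2 * (C k - 2 * X) * H + C e)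
    (hu0 : 2 * u 0 = coeff 1 H) (hu1 : u 1 = 3 * k * u 0 - coeff 0 H)
    (hu : ∀ n : ℕ, u (n + 2) = k * (2 * n + 5) * u (n + 1) - (n + 2) ^ 2 * u n) (n : ℕ) :
    2 ^ (n + 1) * u n = (n + 1)! * coeff (n + 1) H := by
  have hrec := coeff_add_two_of_legendreQuadratic_mul_derivative hH
  induction n using Nat.twoStepInduction with
  | zero => simpa using hu0
  | one =>
    have := hrec 0
    simp only [Nat.factorial]
    push_cast at this ⊢
    linear_combination 4 * hu1 + 6 * k * hu0 - this
  | more n ih ih' =>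
    have := hrec (n + 1)
    rw [hu]
    simp only [Nat.factorial_succ (n + 1 + 1), Nat.factorial_succ (n + 1)] at ih' ⊢
    push_cast at ih' this ⊢
    linear_combination 2 * k * (2 * n + 5) * ih' - 4 * ((n : R) + 2) ^ 2 * ih
      - (n + 2) * ((n + 1)! : R) * this

end CommRing

section NeZeroTwo

variable {R : Type*} [CommRing R] [IsDomain R] [NeZero (2 : R)] {k : R}

theorem legendreQuadratic_mul_derivative {G : R⟦X⟧} (hG : legendreQuadratic k * G ^ 2 = 1) :
    legendreQuadratic k * d⁄dX R G = 2 * (C k - 2 * X) * G := by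
  have hderiv := congrArg (d⁄dX R) hG
  simp only [Derivation.leibniz, derivative_pow, derivative_legendreQuadratic,
    Derivation.map_one_eq_zero, smul_eq_mul] at hderiv
  push_cast at hderiv
  have h2 : (2 : R⟦X⟧) ≠ 0 := by
    rw [← map_ofNat C 2, Ne, map_eq_zero_iff _ C_injective]
    exact two_ne_zero
  have hG0 : G ≠ 0 := by
    rintro rfl
    simp at hG
  apply mul_left_cancel₀ (mul_ne_zero h2 hG0)
  linear_combination hderiv

theorem factorial_succ_dvd_two_pow_mul_num {p : ℕ → R} (hp0 : p 0 = k) (hp1 : p 1 = 3 * k ^ 2 - 1)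
    (hp : ∀ n : ℕ, p (n + 2) = k * (2 * n + 5) * p (n + 1) - (n + 2) ^ 2 * p n) (n : ℕ) :
    ((n + 1)! : R) ∣ 2 ^ n * p n := by
  obtain ⟨F, hF0, hF⟩ := exists_legendreQuadratic_mul_sq_eq_one k
  set G : R⟦X⟧ := 1 + 2 * F with hG
  have hODE : legendreQuadratic k * d⁄dX R G = 2 * (C k - 2 * X) * G + C 0 := by
    rw [map_zero, add_zero, legendreQuadratic_mul_derivative hF]
  have hG0 : coeff 0 G = 1 := by simp [hG, hF0]
  have hG1 : coeff 1 G = 2 * k := by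
    rw [coeff_one_of_legendreQuadratic_mul_derivative hODE, hG0]
    ring
  have hformula := two_pow_succ_mul_eq_factorial_mul_coeff hODE (by rw [hp0, hG1])
    (by rw [hp0, hp1, hG0]; ring) hp n
  have hcoeff : coeff (n + 1) G = 2 * coeff (n + 1) F := by
    rw [hG, ← map_ofNat C 2, map_add, coeff_C_mul, coeff_one, if_neg n.succ_ne_zero, zero_add]
  refine ⟨coeff (n + 1) F, mul_left_cancel₀ two_ne_zero ?_⟩
  rw [hcoeff] at hformula
  linear_combination hformula

end NeZeroTwo

section Field

variable {K : Type*} [Field K] [CharZero K]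

theorem derivative_X_mul_mk_coeff_div (G : K⟦X⟧) :
    d⁄dX K (X * PowerSeries.mk fun n ↦ coeff n G / (n + 1)) = G := by
  ext n
  rw [coeff_derivative, coeff_succ_X_mul, coeff_mk, div_mul_cancel₀ _ n.cast_add_one_ne_zero]

theorem two_pow_mul_den_eq_sum_antidiagonal_div {k : K} {G : K⟦X⟧} {q : ℕ → K}
    (hG : legendreQuadratic k * G ^ 2 = 1) (hq0 : q 0 = 1) (hq1 : q 1 = 3 * k)
    (hq : ∀ n : ℕ, q (n + 2) = k * (2 * n + 5) * q (n + 1) - (n + 2) ^ 2 * q n) (n : ℕ) :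
    2 ^ n * q n = ∑ ij ∈ antidiagonal n,
      ((n + 1)! : K) / (ij.2 + 1) * (coeff ij.1 G * coeff ij.2 G) := by
  set J₁ : K⟦X⟧ := PowerSeries.mk fun n ↦ coeff n G / (n + 1) with hJ₁
  have hODE : legendreQuadratic k * d⁄dX K (2 * (X * (G * J₁)))
      = 2 * (C k - 2 * X) * (2 * (X * (G * J₁))) + C 2 := by
    have hXGJ : 2 * (X * (G * J₁)) = G * (X * J₁) + G * (X * J₁) := by ring
    rw [hXGJ, map_add, Derivation.leibniz, derivative_X_mul_mk_coeff_div, map_ofNat]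
    simp only [smul_eq_mul]
    linear_combination 2 * (X * J₁) * legendreQuadratic_mul_derivative hG + 2 * hG
  have hcoeff (n : ℕ) : coeff (n + 1) (2 * (X * (G * J₁))) = 2 * coeff n (G * J₁) := by
    rw [← map_ofNat C 2, coeff_C_mul, coeff_succ_X_mul]
  have h0 : coeff 0 (2 * (X * (G * J₁))) = 0 := by simp
  have hformula := two_pow_succ_mul_eq_factorial_mul_coeff hODE
    (by rw [coeff_one_of_legendreQuadratic_mul_derivative hODE, h0, hq0]; ring)
    (by rw [h0, hq0, hq1]; ring) hq n
  rw [hcoeff] at hformula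
  calc 2 ^ n * q n = (n + 1)! * coeff n (G * J₁) := by linear_combination hformula / 2
    _ = _ := by
      simp only [coeff_mul, Finset.mul_sum, hJ₁, coeff_mk]
      exact Finset.sum_congr rfl fun _ _ ↦ by ring

end Field

theorem factorial_div_lcmUpto_dvd_factorial_succ_div {n j : ℕ} (hj : j ≤ n) :
    n ! / lcmUpto n ∣ (n + 1)! / (j + 1) := by
  apply Nat.dvd_div_of_mul_dvd
  rcases hj.lt_or_eq with hlt | rfl
  · have hlcm : j + 1 ∣ lcmUpto n := Finset.dvd_lcm (f := id) (by simpa using hlt)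
    calc (j + 1) * (n ! / lcmUpto n) ∣ lcmUpto n * (n ! / lcmUpto n) := mul_dvd_mul_right hlcm _
      _ = n ! := Nat.mul_div_cancel' (lcmUpto_dvd_factorial n)
      _ ∣ (n + 1)! := Nat.factorial_dvd_factorial n.le_succ
  · exact mul_dvd_mul_left _ (Nat.div_dvd_of_dvd (lcmUpto_dvd_factorial j))

section IsDomain

variable {R : Type*} [CommRing R] [IsDomain R] [CharZero R] {k : R}

theorem two_pow_mul_den_eq_sum_antidiagonal {G : R⟦X⟧} {q : ℕ → R}
    (hG : legendreQuadratic k * G ^ 2 = 1) (hq0 : q 0 = 1) (hq1 : q 1 = 3 * k)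
    (hq : ∀ n : ℕ, q (n + 2) = k * (2 * n + 5) * q (n + 1) - (n + 2) ^ 2 * q n) (n : ℕ) :
    2 ^ n * q n = ∑ ij ∈ antidiagonal n,
      (((n + 1)! / (ij.2 + 1) : ℕ) : R) * (coeff ij.1 G * coeff ij.2 G) := by
  let ι : R →+* FractionRing R := algebraMap R (FractionRing R)
  have hι : Function.Injective ι := IsFractionRing.injective R (FractionRing R)
  have : CharZero (FractionRing R) := charZero_of_injective_algebraMap hι
  have hιG : legendreQuadratic (ι k) * (G.map ι) ^ 2 = 1 := by
    simpa [legendreQuadratic, map_ofNat] using congrArg (PowerSeries.map ι) hG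
  have hformula := two_pow_mul_den_eq_sum_antidiagonal_div (q := fun n ↦ ι (q n)) hιG
    (by simp [hq0]) (by simp [hq1, map_ofNat]) (by simp [hq, map_ofNat]) n
  apply hι
  simp only [map_mul, map_pow, map_ofNat, map_sum, map_natCast]
  rw [hformula]
  refine Finset.sum_congr rfl fun ij hij ↦ ?_
  have hdvd : ij.2 + 1 ∣ (n + 1)! :=
    Nat.dvd_factorial ij.2.succ_pos (Nat.succ_le_succ (antidiagonal.snd_le hij))
  rw [Nat.cast_div hdvd (Nat.cast_ne_zero.2 ij.2.succ_ne_zero)]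
  simp only [coeff_map]
  push_cast
  rfl

theorem factorial_div_lcmUpto_dvd_two_pow_mul_den {q : ℕ → R} (hq0 : q 0 = 1) (hq1 : q 1 = 3 * k)
    (hq : ∀ n : ℕ, q (n + 2) = k * (2 * n + 5) * q (n + 1) - (n + 2) ^ 2 * q n) (n : ℕ) :
    ((n ! / lcmUpto n : ℕ) : R) ∣ 2 ^ n * q n := by
  obtain ⟨F, -, hF⟩ := exists_legendreQuadratic_mul_sq_eq_one k
  rw [two_pow_mul_den_eq_sum_antidiagonal hF hq0 hq1 hq]
  exact Finset.dvd_sum fun ij hij ↦ (Nat.cast_dvd_cast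
    (factorial_div_lcmUpto_dvd_factorial_succ_div (antidiagonal.snd_le hij))).mul_right _

end IsDomain

theorem stmt_10_general {R : Type*} [CommRing R] [IsDomain R] [CharZero R] (k : R)
    (a b : ℕ → R)
    (ha : ∀ n : ℕ, a n = k * (2 * n + 1))
    (hb : ∀ n : ℕ, b n = -(n : R) ^ 2)
    (p q : ℕ → R)
    (hp0 : p 0 = a 0) (hq0 : q 0 = 1)
    (hp1 : p 1 = a 1 * p 0 + b 1 * 1) (hq1 : q 1 = a 1 * q 0 + b 1 * 0)
    (hprec : ∀ n : ℕ, p (n + 2) = a (n + 2) * p (n + 1) + b (n + 2) * p n)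
    (hqrec : ∀ n : ℕ, q (n + 2) = a (n + 2) * q (n + 1) + b (n + 2) * q n) (n : ℕ) :
    ((n ! / (Finset.Icc 1 n).lcm id : ℕ) : R) ∣ 2 ^ n * p n ∧
      ((n ! / (Finset.Icc 1 n).lcm id : ℕ) : R) ∣ 2 ^ n * q n := by
  have ha0 : a 0 = k := by simp [ha]
  have ha1 : a 1 = 3 * k := by norm_num [ha, mul_comm]
  have hb1 : b 1 = -1 := by simp [hb]
  have ha2 (m : ℕ) : a (m + 2) = k * (2 * m + 5) := by rw [ha]; push_cast; ring
  have hb2 (m : ℕ) : b (m + 2) = -(m + 2) ^ 2 := by rw [hb]; push_cast; ring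
  have hdvd : n ! / lcmUpto n ∣ (n + 1)! :=
    (Nat.div_dvd_of_dvd (lcmUpto_dvd_factorial n)).trans (Nat.factorial_dvd_factorial n.le_succ)
  constructor
  · exact (Nat.cast_dvd_cast hdvd).trans <| factorial_succ_dvd_two_pow_mul_num (by rw [hp0, ha0])
      (by rw [hp1, hp0, ha0, ha1, hb1]; ring) (fun m ↦ by rw [hprec, ha2, hb2]; ring) n
  · exact factorial_div_lcmUpto_dvd_two_pow_mul_den (k := k) hq0 (by rw [hq1, hq0, ha1]; ring)
      (fun m ↦ by rw [hqrec, ha2, hb2]; ring) n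

/-- Appendix D application: GCD bound for `a(n) = k(2n+1)`,
`b(n) = −n²`. For the convergents `p, q` of this PCF and every `n ≥ 1`,
`n!/lcm(1,…,n)` divides `2^n · gcd(pₙ, qₙ)`. -/
theorem stmt_10 (k : ℕ) (hk : 1 ≤ k)
    (a b : ℕ → ℤ)
    (ha : ∀ n : ℕ, a n = (k : ℤ) * (2 * n + 1))
    (hb : ∀ n : ℕ, b n = -(n : ℤ) ^ 2)
    (p q : ℕ → ℤ)
    (hp0 : p 0 = a 0) (hq0 : q 0 = 1)
    (hp1 : p 1 = a 1 * p 0 + b 1 * 1) (hq1 : q 1 = a 1 * q 0 + b 1 * 0)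
    (hprec : ∀ n : ℕ, p (n + 2) = a (n + 2) * p (n + 1) + b (n + 2) * p n)
    (hqrec : ∀ n : ℕ, q (n + 2) = a (n + 2) * q (n + 1) + b (n + 2) * q n) :
    ∀ n : ℕ, 1 ≤ n →
      (Nat.factorial n / (Finset.Icc 1 n).lcm id) ∣ 2 ^ n * Int.gcd (p n) (q n) := by
  intro n _
  have ⟨hp, hq⟩ := stmt_10_general (k : ℤ) a b ha hb p q hp0 hq0 hp1 hq1 hprec hqrec n
  simpa [Int.gcd_mul_left, Int.natAbs_pow] using Int.dvd_gcd hp hq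
end

section
/- Let b ∈ ℤ[X] be a polynomial of degree d ≥ 1 with leading coefficient B, and suppose b(i) ≠ 0 for all integers i ≥ 1. Then lim_{n→∞} (1/n) · ln( |∏_{i=1}^{n} b(i)| / ( |B|^n · (n!)^d ) ) = 0; i.e., ∏_{i=1}^{n} b(i) ≐ B^n · (n!)^d up to sub-exponential factors. -/
open Filter Polynomial

open Asymptotics Finset
open scoped Nat Topology

/-! The ratio of `‖b(i)‖` to the norm `‖B * i ^ d‖` of the leading monomial tends to `1`, so its
logarithm tends to `0`, and hence so do the Cesàro means of these logarithms. The norms of the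
leading monomials multiply up to `‖B‖ ^ n * (n !) ^ d`. -/

theorem isEquivalent_norm {α E : Type*} [SeminormedAddCommGroup E] {l : Filter α} {u v : α → E}
    (h : u ~[l] v) : (‖u ·‖) ~[l] (‖v ·‖) :=
  (IsBigO.of_bound' (.of_forall fun x ↦ abs_norm_sub_norm_le (u x) (v x))).trans_isLittleO
    (IsLittleO.norm_right h)

theorem tendsto_log_div_of_isEquivalent {α : Type*} {l : Filter α} {u v : α → ℝ}
    (h : u ~[l] v) (hv : ∀ᶠ x in l, v x ≠ 0) :
    Tendsto (fun x ↦ Real.log (u x / v x)) l (𝓝 0) := by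
  simpa using ((isEquivalent_iff_tendsto_one hv).1 h).log one_ne_zero

theorem tendsto_cesaro_smul_Icc_one {E : Type*} [NormedAddCommGroup E] [NormedSpace ℝ E]
    {u : ℕ → E} {a : E} (h : Tendsto u atTop (𝓝 a)) :
    Tendsto (fun n : ℕ ↦ (n : ℝ)⁻¹ • ∑ i ∈ Icc 1 n, u i) atTop (𝓝 a) := by
  simpa only [range_eq_Ico, Function.comp_def, sum_Ico_add', zero_add,
    Ico_add_one_right_eq_Icc] using (h.comp (tendsto_add_atTop_nat 1)).cesaro_smul

theorem tendsto_inv_mul_log_prod_div_of_isEquivalent {u v : ℕ → ℝ} (h : u ~[atTop] v)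
    (hu : ∀ i, 1 ≤ i → u i ≠ 0) (hv : ∀ i, 1 ≤ i → v i ≠ 0) :
    Tendsto (fun n : ℕ ↦ (n : ℝ)⁻¹ * Real.log ((∏ i ∈ Icc 1 n, u i) / ∏ i ∈ Icc 1 n, v i))
      atTop (𝓝 0) := by
  have hlog : Tendsto (fun i ↦ Real.log (u i / v i)) atTop (𝓝 0) :=
    tendsto_log_div_of_isEquivalent h ((eventually_ge_atTop 1).mono hv)
  refine (tendsto_cesaro_smul_Icc_one hlog).congr fun n ↦ ?_
  have hdiv : ∀ i ∈ Icc 1 n, u i / v i ≠ 0 := fun i hi ↦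
    div_ne_zero (hu i (mem_Icc.1 hi).1) (hv i (mem_Icc.1 hi).1)
  rw [smul_eq_mul, ← Real.log_prod hdiv, prod_div_distrib]

section NormedRing

variable {R : Type*} [NormedRing R] [NormMulClass R] [NormSMulClass ℤ R] [NormOneClass R]

theorem prod_Icc_one_norm_mul_natCast_pow (c : R) (d n : ℕ) :
    ∏ i ∈ Icc 1 n, ‖c * (i : R) ^ d‖ = ‖c‖ ^ n * (n ! : ℝ) ^ d := by
  calc
    ∏ i ∈ Icc 1 n, ‖c * (i : R) ^ d‖ = ∏ i ∈ Icc 1 n, ‖c‖ * (i : ℝ) ^ d := by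
      simp only [norm_mul, norm_pow, norm_natCast]
    _ = ‖c‖ ^ n * ((∏ i ∈ Icc 1 n, i : ℕ) : ℝ) ^ d := by
      rw [prod_mul_distrib, prod_const, Nat.card_Icc, Nat.add_sub_cancel, prod_pow, Nat.cast_prod]
    _ = ‖c‖ ^ n * (n ! : ℝ) ^ d := by
      rw [← Ico_add_one_right_eq_Icc, prod_Ico_id_eq_factorial]

theorem isEquivalent_eval_natCast (P : R[X]) :
    (fun n : ℕ ↦ P.eval (n : R)) ~[atTop] fun n : ℕ ↦ P.leadingCoeff * (n : R) ^ P.natDegree := by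
  have : Nontrivial R := NormOneClass.nontrivial
  exact (isEquivalent_cobounded_leading_monomial (P := P)).comp_tendsto
    tendsto_natCast_atTop_cobounded

end NormedRing

theorem stmt_13_general {R : Type*} [NormedCommRing R] [NormMulClass R] [NormSMulClass ℤ R]
    [NormOneClass R] (P : R[X]) (hP : ∀ i : ℕ, 1 ≤ i → P.eval (i : R) ≠ 0) :
    Tendsto (fun n : ℕ ↦ (1 : ℝ) / n * Real.log
        (‖∏ i ∈ Icc 1 n, P.eval (i : R)‖ / (‖P.leadingCoeff‖ ^ n * (n ! : ℝ) ^ P.natDegree)))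
      atTop (𝓝 0) := by
  have hlead : P.leadingCoeff ≠ 0 := by
    intro h
    exact hP 1 le_rfl (by rw [leadingCoeff_eq_zero.1 h, eval_zero])
  have hmonomial (i : ℕ) (hi : 1 ≤ i) : ‖P.leadingCoeff * (i : R) ^ P.natDegree‖ ≠ 0 := by
    rw [norm_mul, norm_pow, norm_natCast]
    positivity
  simpa only [one_div, norm_prod, prod_Icc_one_norm_mul_natCast_pow] using
    tendsto_inv_mul_log_prod_div_of_isEquivalent (isEquivalent_norm (isEquivalent_eval_natCast P))
      (fun i hi ↦ norm_ne_zero_iff.2 (hP i hi)) hmonomial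

/-- Step 2 of Appendix B: `∏_{i=1}^{n} b(i) ≐ B^n · (n!)^d`.
For a polynomial `b ∈ ℤ[X]` of degree `d ≥ 1` with leading coefficient `B` and
`b(i) ≠ 0` for all integers `i ≥ 1`,
`lim (1/n)·ln( |∏_{i=1}^{n} b(i)| / (|B|^n · (n!)^d) ) = 0`. -/
theorem stmt_13 (b : Polynomial ℤ) (d : ℕ) (hd : 1 ≤ d) (hdb : b.natDegree = d)
    (hbne : ∀ i : ℕ, 1 ≤ i → b.eval (i : ℤ) ≠ 0) :
    Tendsto (fun n : ℕ =>
        (1 : ℝ) / n * Real.log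
          (((|∏ i ∈ Finset.Icc 1 n, b.eval (i : ℤ)| : ℤ) : ℝ) /
            (|(b.leadingCoeff : ℝ)| ^ n * (Nat.factorial n : ℝ) ^ d)))
      atTop (nhds 0) := by
  subst hdb
  simpa only [Int.norm_eq_abs, Int.cast_abs] using stmt_13_general b hbne
end

section
/- Let a, b ∈ ℤ[X] with deg b < 2·deg a = 2·d_a, positive leading coefficient A of a, and a(n) > 0, b(n) > 0 for all integers n ≥ 1. Let q be the denominator sequence of PCF[a,b] (q_{−1}=0, q_0=1, q_n = a(n)q_{n−1} + b(n)q_{n−2}). Then lim_{n→∞} (1/n)·ln( q_n / (A^n · (n!)^{d_a}) ) = 0; i.e., q_n ≐ A^n · (n!)^{d_a}. -/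
open Filter Polynomial

/-!
Since `b ≥ 0`, the recurrence gives `a(n) q_{n-1} ≤ q_n`, so that
`b(n+1) q_{n-1} ≤ (b(n+1) / (a(n) a(n+1))) · a(n+1) q_n`. As `deg b < 2 deg a` the quotient tends
to `0`, and the recurrence becomes `q_{n+1} ∼ a(n+1) q_n ∼ A (n+1)^d q_n`. Taking logarithms and
averaging compares `q_n` with `∏_{i < n} A (i+1)^d = A^n (n!)^d`.
-/

open Asymptotics Topology

section LogarithmicGrowth

theorem tendsto_one_div_mul_log_of_tendsto_ratio {u : ℕ → ℝ} {l : ℝ} (hl : l ≠ 0)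
    (hu : Tendsto (fun n => u (n + 1) / u n) atTop (𝓝 l)) :
    Tendsto (fun n : ℕ => (1 : ℝ) / n * Real.log (u n)) atTop (𝓝 (Real.log l)) := by
  have log_ratio : (fun n => Real.log (u (n + 1) / u n)) =ᶠ[atTop]
      fun n => Real.log (u (n + 1)) - Real.log (u n) := by
    filter_upwards [hu.eventually_ne hl] with n hn
    exact Real.log_div (div_ne_zero_iff.mp hn).1 (div_ne_zero_iff.mp hn).2
  have average := ((hu.log hl).congr' log_ratio).cesaro
  simp only [Finset.sum_range_sub (fun n => Real.log (u n))] at average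
  have initial := tendsto_const_div_atTop_nhds_zero_nat (Real.log (u 0))
  refine (add_zero (Real.log l) ▸ average.add initial).congr fun n => ?_
  ring

theorem tendsto_one_div_mul_log_div_prod_of_isEquivalent {x c : ℕ → ℝ}
    (hx : ∀ᶠ n in atTop, x n ≠ 0) (hc : ∀ n, c n ≠ 0)
    (h : (fun n => x (n + 1)) ~[atTop] fun n => c n * x n) :
    Tendsto (fun n : ℕ => (1 : ℝ) / n * Real.log (x n / ∏ i ∈ Finset.range n, c i))
      atTop (𝓝 0) := by
  have ratio := (isEquivalent_iff_tendsto_one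
    (hx.mono fun n hn => mul_ne_zero (hc n) hn)).mp h
  rw [← Real.log_one]
  refine tendsto_one_div_mul_log_of_tendsto_ratio one_ne_zero (ratio.congr fun n => ?_)
  have prod_ne_zero : ∏ i ∈ Finset.range n, c i ≠ 0 := Finset.prod_ne_zero_iff.mpr fun i _ => hc i
  rw [Finset.prod_range_succ, div_div_div_comm, mul_div_cancel_left₀ _ prod_ne_zero, div_div,
    mul_comm (x n), Pi.div_apply]

end LogarithmicGrowth

section LinearRecurrence

theorem pos_of_linear_recurrence {R : Type*} [Semiring R] [PartialOrder R] [IsStrictOrderedRing R]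
    {q α β : ℕ → R} (hq₀ : 0 < q 0) (hq₁ : 0 < q 1) (hα : ∀ n, 0 < α n) (hβ : ∀ n, 0 ≤ β n)
    (hrec : ∀ n, q (n + 2) = α n * q (n + 1) + β n * q n) (n : ℕ) : 0 < q n := by
  induction n using Nat.twoStepInduction with
  | zero => exact hq₀
  | one => exact hq₁
  | more n ih₀ ih₁ =>
    rw [hrec]
    exact add_pos_of_pos_of_nonneg (mul_pos (hα n) ih₁) (mul_nonneg (hβ n) ih₀.le)

variable {q α β : ℕ → ℝ}

theorem mul_isBigO_succ_of_linear_recurrence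
    (hq : ∀ᶠ n in atTop, 0 ≤ q n) (hα : ∀ᶠ n in atTop, 0 ≤ α n) (hβ : ∀ᶠ n in atTop, 0 ≤ β n)
    (hrec : ∀ᶠ n in atTop, q (n + 2) = α (n + 2) * q (n + 1) + β (n + 2) * q n) :
    (fun n => α (n + 1) * q n) =O[atTop] fun n => q (n + 1) := by
  rw [← map_add_atTop_eq_nat 1, isBigO_map]
  have shift₂ := tendsto_add_atTop_nat 2
  refine IsBigO.of_norm_eventuallyLE ?_
  filter_upwards [hq, (tendsto_add_atTop_nat 1).eventually hq, shift₂.eventually hα,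
    shift₂.eventually hβ, hrec] with n hq₀ hq₁ hα₂ hβ₂ hrec
  simp only [Function.comp_apply, add_assoc, Nat.reduceAdd]
  rw [Real.norm_of_nonneg (mul_nonneg hα₂ hq₁), hrec]
  exact le_add_of_nonneg_right (mul_nonneg hβ₂ hq₀)

theorem succ_isEquivalent_of_linear_recurrence
    (hq : ∀ᶠ n in atTop, 0 ≤ q n) (hα : ∀ᶠ n in atTop, 0 ≤ α n) (hβ : ∀ᶠ n in atTop, 0 ≤ β n)
    (hrec : ∀ᶠ n in atTop, q (n + 2) = α (n + 2) * q (n + 1) + β (n + 2) * q n)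
    (hβα : (fun n => β (n + 1)) =o[atTop] fun n => α n * α (n + 1)) :
    (fun n => q (n + 1)) ~[atTop] fun n => α (n + 1) * q n := by
  have negligible :
      (fun n => β (n + 2) * q n) =o[atTop] fun n => α (n + 2) * q (n + 1) := calc
    _ =o[atTop] fun n => α (n + 1) * α (n + 2) * q n :=
      (hβα.comp_tendsto (tendsto_add_atTop_nat 1)).mul_isBigO (isBigO_refl q atTop)
    _ =ᶠ[atTop] fun n => α (n + 2) * (α (n + 1) * q n) := .of_forall fun n => by ring
    _ =O[atTop] fun n => α (n + 2) * q (n + 1) :=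
      (isBigO_refl _ atTop).mul (mul_isBigO_succ_of_linear_recurrence hq hα hβ hrec)
  rw [← map_add_atTop_eq_nat 1]
  exact isLittleO_map.mpr <|
    (IsEquivalent.refl.add_isLittleO negligible).congr_left (hrec.mono fun n hn => hn.symm)

end LinearRecurrence

section PolynomialAsymptotics

variable {𝕜 : Type*} [NormedField 𝕜] [LinearOrder 𝕜] [IsStrictOrderedRing 𝕜] [OrderTopology 𝕜]

theorem isLittleO_eval_add_of_natDegree_lt_two_mul {a b : 𝕜[X]} (r : 𝕜)
    (h : b.natDegree < 2 * a.natDegree) :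
    (fun x => b.eval (x + r)) =o[atTop] fun x => a.eval x * a.eval (x + r) := by
  have ha : a ≠ 0 := ne_zero_of_natDegree_gt (n := 0) (by omega)
  have degree_lt : (taylor r b).degree < (a * taylor r a).degree := by
    apply degree_lt_degree
    rw [natDegree_mul ha (mt (taylor_eq_zero r a).mp ha), natDegree_taylor, natDegree_taylor]
    omega
  simpa only [eval_mul, taylor_eval] using isLittleO_atTop_of_degree_lt _ _ degree_lt

end PolynomialAsymptotics

theorem prod_range_mul_add_one_pow {R : Type*} [CommSemiring R] (c : R) (d n : ℕ) :
    ∏ i ∈ Finset.range n, c * ((i : R) + 1) ^ d = c ^ n * (n.factorial : R) ^ d := by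
  rw [Finset.prod_mul_distrib, Finset.prod_const, Finset.card_range, Finset.prod_pow,
    ← Finset.prod_range_add_one_eq_factorial]
  push_cast
  rfl

theorem succ_isEquivalent_of_polynomial_recurrence {a b : ℝ[X]}
    (hdeg : b.natDegree < 2 * a.natDegree) (hA : 0 < a.leadingCoeff)
    (hb : ∀ᶠ n : ℕ in atTop, 0 ≤ b.eval (n : ℝ)) {q : ℕ → ℝ} (hq : ∀ᶠ n in atTop, 0 ≤ q n)
    (hrec : ∀ᶠ n : ℕ in atTop,
      q (n + 2) = a.eval ((n + 2 : ℕ) : ℝ) * q (n + 1) + b.eval ((n + 2 : ℕ) : ℝ) * q n) :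
    (fun n => q (n + 1)) ~[atTop]
      fun n => a.leadingCoeff * ((n : ℝ) + 1) ^ a.natDegree * q n := by
  have ha : ∀ᶠ n : ℕ in atTop, 0 ≤ a.eval (n : ℝ) :=
    ((a.tendsto_atTop_of_leadingCoeff_nonneg (natDegree_pos_iff_degree_pos.mp (by omega))
      hA.le).comp tendsto_natCast_atTop_atTop).eventually_ge_atTop 0
  have small := (isLittleO_eval_add_of_natDegree_lt_two_mul 1 hdeg).comp_tendsto
    (tendsto_natCast_atTop_atTop (R := ℝ))
  have leading := a.isEquivalent_atTop_lead.comp_tendsto <|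
    tendsto_atTop_add_const_right atTop (1 : ℝ) tendsto_natCast_atTop_atTop
  have step : (fun n => q (n + 1)) ~[atTop] fun n => a.eval ((n : ℝ) + 1) * q n := by
    exact_mod_cast succ_isEquivalent_of_linear_recurrence (α := fun n => a.eval (n : ℝ))
      (β := fun n => b.eval (n : ℝ)) hq ha hb hrec
      (by simpa [Function.comp_def] using small)
  exact step.trans (leading.mul .refl)

theorem stmt_15_general (a b : ℝ[X]) (hdeg : b.natDegree < 2 * a.natDegree)
    (hA : 0 < a.leadingCoeff) (hb : ∀ᶠ n : ℕ in atTop, 0 ≤ b.eval (n : ℝ))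
    (q : ℕ → ℝ) (hq : ∀ᶠ n in atTop, 0 < q n)
    (hrec : ∀ᶠ n : ℕ in atTop,
      q (n + 2) = a.eval ((n + 2 : ℕ) : ℝ) * q (n + 1) + b.eval ((n + 2 : ℕ) : ℝ) * q n) :
    Tendsto (fun n : ℕ =>
        (1 : ℝ) / n * Real.log (q n / (a.leadingCoeff ^ n * (n.factorial : ℝ) ^ a.natDegree)))
      atTop (𝓝 0) := by
  simp only [← prod_range_mul_add_one_pow]
  exact tendsto_one_div_mul_log_div_prod_of_isEquivalent (hq.mono fun n hn => hn.ne')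
    (fun n => by positivity)
      (succ_isEquivalent_of_polynomial_recurrence hdeg hA hb (hq.mono fun n hn => hn.le) hrec)

/-- Appendix B, third case: `deg b < 2·deg a`.
For such a PCF with positive leading coefficient `A` of `a` and positive values on
positive integers, the denominators satisfy
`lim (1/n)·ln( qₙ / (Aⁿ·(n!)^{d_a}) ) = 0`, i.e. `qₙ ≐ Aⁿ·(n!)^{d_a}`. -/
theorem stmt_15 (a b : Polynomial ℤ)
    (hdeg : b.natDegree < 2 * a.natDegree)
    (hA : 0 < a.leadingCoeff)
    (hapos : ∀ n : ℕ, 1 ≤ n → 0 < a.eval (n : ℤ))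
    (hbpos : ∀ n : ℕ, 1 ≤ n → 0 < b.eval (n : ℤ))
    (q : ℕ → ℤ)
    (hq0 : q 0 = 1)
    (hq1 : q 1 = a.eval 1 * q 0 + b.eval 1 * 0)
    (hqrec : ∀ n : ℕ, q (n + 2) = a.eval ((n : ℤ) + 2) * q (n + 1) + b.eval ((n : ℤ) + 2) * q n) :
    Tendsto (fun n : ℕ =>
        (1 : ℝ) / n * Real.log ((q n : ℝ) /
          ((a.leadingCoeff : ℝ) ^ n * (Nat.factorial n : ℝ) ^ a.natDegree)))
      atTop (nhds 0) := by
  have hq : ∀ n, 0 < q n := pos_of_linear_recurrence (by simp [hq0])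
    (by simpa [hq0, hq1] using hapos 1 le_rfl) (fun n => mod_cast hapos (n + 2) (by omega))
    (fun n => mod_cast (hbpos (n + 2) (by omega)).le) hqrec
  have injective_cast := RingHom.injective_int (Int.castRingHom ℝ)
  simpa [natDegree_map_eq_of_injective injective_cast,
    leadingCoeff_map_of_injective injective_cast] using
    stmt_15_general (a.map (Int.castRingHom ℝ)) (b.map (Int.castRingHom ℝ))
      (by simpa only [natDegree_map_eq_of_injective injective_cast] using hdeg)
      (by simpa [leadingCoeff_map_of_injective injective_cast] using hA)
      ((eventually_ge_atTop 1).mono fun n hn => by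
        simpa [eval_natCast_map] using (hbpos n hn).le)
      (fun n => q n) (.of_forall fun n => mod_cast hq n)
      (.of_forall fun n => by simp only [eval_natCast_map, eq_intCast]; exact_mod_cast hqrec n)
end

section
/- Let a, b ∈ ℤ[X] with deg b = d_b > 2·deg a, positive leading coefficient B of b, and a(n) > 0, b(n) > 0 for all integers n ≥ 1. Let q be the denominator sequence of PCF[a,b] (q_{−1}=0, q_0=1, q_n = a(n)q_{n−1} + b(n)q_{n−2}). Then lim_{n→∞} (1/n)·ln( q_n / (B^{n/2} · (n!)^{d_b/2}) ) = 0; i.e., q_n ≐ B^{n/2} · (n!)^{d_b/2}. -/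
open Filter Polynomial

/-!
Divide `q n` by `D n = B ^ (n / 2) * n! ^ (d / 2)`, which satisfies `D (n + 1) = s (n + 1) * D n`
with `s n = √B * n ^ (d / 2)`. The quotient `u` satisfies
`u (n + 2) = α n * u (n + 1) + β n * u n` with `α → 0` (because `deg a < d / 2`) and `β → 1`
(because `b n ~ s n ^ 2`). Hence, for every `δ > 0`, neither `log (u n) - n δ` nor
`-log (u n) - n δ` eventually exceeds the larger of its two predecessors, so both are bounded
above, and `log (u n) = o(n)`.
-/

open Asymptotics Topology

lemma isBoundedUnder_le_of_le_max {X : Type*} [LinearOrder X] {x : ℕ → X}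
    (hx : ∀ᶠ n in atTop, x (n + 2) ≤ max (x n) (x (n + 1))) :
    IsBoundedUnder (· ≤ ·) atTop x := by
  obtain ⟨N, hN⟩ := eventually_atTop.mp hx
  have hmax : ∀ n ≥ N, max (x n) (x (n + 1)) ≤ max (x N) (x (N + 1)) := fun n hn ↦ by
    induction n, hn using Nat.le_induction with
    | base => exact le_rfl
    | succ n hn ih => exact (max_le (le_max_right _ _) (hN n hn)).trans ih
  exact isBoundedUnder_of_eventually_le <|
    (eventually_ge_atTop N).mono fun n hn ↦ (le_max_left _ _).trans (hmax n hn)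

lemma isLittleO_natCast_of_isBoundedUnder {x : ℕ → ℝ}
    (upper : ∀ δ > 0, IsBoundedUnder (· ≤ ·) atTop fun n : ℕ ↦ x n - n * δ)
    (lower : ∀ δ > 0, IsBoundedUnder (· ≤ ·) atTop fun n : ℕ ↦ -x n - n * δ) :
    x =o[atTop] fun n : ℕ ↦ (n : ℝ) := by
  refine isLittleO_iff.mpr fun ε hε ↦ ?_
  obtain ⟨C, hC⟩ := upper (ε / 2) (half_pos hε)
  obtain ⟨C', hC'⟩ := lower (ε / 2) (half_pos hε)
  have hlin : Tendsto (fun n : ℕ ↦ (n : ℝ) * (ε / 2)) atTop atTop :=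
    tendsto_natCast_atTop_atTop.atTop_mul_const (half_pos hε)
  filter_upwards [eventually_map.mp hC, eventually_map.mp hC', hlin.eventually_ge_atTop C,
    hlin.eventually_ge_atTop C'] with n h h' hn hn'
  rw [Real.norm_eq_abs, Real.norm_natCast, abs_le]
  constructor <;> linarith

section ThreeTermRecurrence

variable {u α β : ℕ → ℝ} {δ : ℝ}

lemma isBoundedUnder_log_sub_of_recurrence_le (hu : ∀ᶠ n in atTop, 0 < u n)
    (hα₀ : ∀ᶠ n in atTop, 0 ≤ α n) (hα : Tendsto α atTop (𝓝 0)) (hβ : Tendsto β atTop (𝓝 1))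
    (hrec : ∀ᶠ n in atTop, u (n + 2) ≤ α n * u (n + 1) + β n * u n) (hδ : 0 < δ) :
    IsBoundedUnder (· ≤ ·) atTop fun n : ℕ ↦ Real.log (u n) - n * δ := by
  have hlim : Tendsto (fun n ↦ α n * Real.exp δ + β n) atTop (𝓝 1) := by
    simpa using (hα.mul_const (Real.exp δ)).add hβ
  have hcoeff : ∀ᶠ n in atTop, α n * Real.exp δ + β n < Real.exp (2 * δ) :=
    hlim.eventually_lt_const (Real.one_lt_exp_iff.mpr (by positivity))
  refine isBoundedUnder_le_of_le_max ?_
  filter_upwards [hu, (tendsto_add_atTop_nat 1).eventually hu,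
    (tendsto_add_atTop_nat 2).eventually hu, hα₀, hβ.eventually_const_lt one_pos, hrec, hcoeff]
    with n hu₀ hu₁ hu₂ hα₀ hβ₀ hrec hcoeff
  set M := max (Real.log (u n) - n * δ) (Real.log (u (n + 1)) - (n + 1 : ℕ) * δ)
  have le₀ : u n ≤ Real.exp (M + n * δ) :=
    (Real.log_le_iff_le_exp hu₀).mp (sub_le_iff_le_add.mp (le_max_left _ _))
  have le₁ : u (n + 1) ≤ Real.exp (M + (n + 1 : ℕ) * δ) :=
    (Real.log_le_iff_le_exp hu₁).mp (sub_le_iff_le_add.mp (le_max_right _ _))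
  rw [sub_le_iff_le_add, Real.log_le_iff_le_exp hu₂]
  calc u (n + 2) ≤ α n * u (n + 1) + β n * u n := hrec
    _ ≤ α n * Real.exp (M + (n + 1 : ℕ) * δ) + β n * Real.exp (M + n * δ) := by gcongr
    _ = Real.exp (M + n * δ) * (α n * Real.exp δ + β n) := by
      rw [show M + (n + 1 : ℕ) * δ = (M + n * δ) + δ by push_cast; ring, Real.exp_add]
      ring
    _ ≤ Real.exp (M + n * δ) * Real.exp (2 * δ) := by gcongr
    _ = Real.exp (M + (n + 2 : ℕ) * δ) := by
      rw [← Real.exp_add]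
      push_cast
      ring_nf

lemma isBoundedUnder_neg_log_sub_of_mul_le (hu : ∀ᶠ n in atTop, 0 < u n)
    (hβ : Tendsto β atTop (𝓝 1)) (hrec : ∀ᶠ n in atTop, β n * u n ≤ u (n + 2)) (hδ : 0 < δ) :
    IsBoundedUnder (· ≤ ·) atTop fun n : ℕ ↦ -Real.log (u n) - n * δ := by
  have hcoeff : ∀ᶠ n in atTop, Real.exp (-(2 * δ)) < β n :=
    hβ.eventually_const_lt (by rw [Real.exp_lt_one_iff]; linarith)
  refine isBoundedUnder_le_of_le_max ?_
  filter_upwards [hu, hrec, hcoeff] with n hu hrec hcoeff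
  have hmul : Real.exp (-(2 * δ)) * u n ≤ u (n + 2) := by grw [hcoeff, hrec]
  have hlog := Real.log_le_log (by positivity) hmul
  rw [Real.log_mul (Real.exp_ne_zero _) hu.ne', Real.log_exp] at hlog
  refine le_max_of_le_left ?_
  push_cast
  linarith

lemma isLittleO_log_of_recurrence (hu : ∀ᶠ n in atTop, 0 < u n)
    (hα₀ : ∀ᶠ n in atTop, 0 ≤ α n) (hα : Tendsto α atTop (𝓝 0)) (hβ : Tendsto β atTop (𝓝 1))
    (hrec : ∀ᶠ n in atTop, u (n + 2) = α n * u (n + 1) + β n * u n) :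
    (fun n ↦ Real.log (u n)) =o[atTop] fun n : ℕ ↦ (n : ℝ) := by
  have hrec_ge : ∀ᶠ n in atTop, β n * u n ≤ u (n + 2) := by
    filter_upwards [hrec, hα₀, (tendsto_add_atTop_nat 1).eventually hu] with n hrec hα₀ hu
    rw [hrec]
    exact le_add_of_nonneg_left (by positivity)
  exact isLittleO_natCast_of_isBoundedUnder
    (fun _ ↦ isBoundedUnder_log_sub_of_recurrence_le hu hα₀ hα hβ (hrec.mono fun _ h ↦ h.le))
    (fun _ ↦ isBoundedUnder_neg_log_sub_of_mul_le hu hβ hrec_ge)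

end ThreeTermRecurrence

lemma isLittleO_log_div_of_recurrence {a b q s D : ℕ → ℝ}
    (hs : ∀ᶠ n in atTop, 0 < s n) (hs_succ : (fun n ↦ s (n + 1)) ~[atTop] s)
    (hD : ∀ᶠ n in atTop, 0 < D n) (hD_succ : ∀ᶠ n in atTop, D (n + 1) = s (n + 1) * D n)
    (ha₀ : ∀ᶠ n in atTop, 0 ≤ a n) (ha : a =o[atTop] s) (hb : b ~[atTop] s ^ 2)
    (hq : ∀ᶠ n in atTop, 0 < q n)
    (hrec : ∀ᶠ n in atTop, q (n + 2) = a (n + 2) * q (n + 1) + b (n + 2) * q n) :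
    (fun n ↦ Real.log (q n / D n)) =o[atTop] fun n : ℕ ↦ (n : ℝ) := by
  have shift₁ := tendsto_add_atTop_nat 1
  have shift₂ := tendsto_add_atTop_nat 2
  have hs₁ := shift₁.eventually hs
  have hs₂ := shift₂.eventually hs
  have hβ : Tendsto (fun n ↦ b (n + 2) / (s (n + 2) * s (n + 1))) atTop (𝓝 1) := by
    have hequiv : (fun n ↦ b (n + 2)) ~[atTop] fun n ↦ s (n + 2) * s (n + 1) := by
      rw [sq] at hb
      exact (hb.comp_tendsto shift₂).trans (IsEquivalent.refl.mul (hs_succ.comp_tendsto shift₁))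
    exact (isEquivalent_iff_tendsto_one (by
      filter_upwards [hs₁, hs₂] with n h₁ h₂ using (mul_pos h₂ h₁).ne')).mp hequiv
  refine isLittleO_log_of_recurrence (α := fun n ↦ a (n + 2) / s (n + 2)) ?_ ?_
    (ha.tendsto_div_nhds_zero.comp shift₂) hβ ?_
  · filter_upwards [hq, hD] with n hq hD using div_pos hq hD
  · filter_upwards [shift₂.eventually ha₀, hs₂] with n ha₀ hs using div_nonneg ha₀ hs.le
  · filter_upwards [hrec, hD, hs₁, hs₂, hD_succ, shift₁.eventually hD_succ]
      with n hrec hD hs₁ hs₂ hD₁ hD₂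
    rw [hrec, hD₂, hD₁]
    field_simp

lemma isEquivalent_natCast_succ_rpow (r : ℝ) :
    (fun n : ℕ ↦ ((n + 1 : ℕ) : ℝ) ^ r) ~[atTop] fun n : ℕ ↦ (n : ℝ) ^ r := by
  have hsucc : (fun n : ℕ ↦ ((n + 1 : ℕ) : ℝ)) ~[atTop] fun n : ℕ ↦ (n : ℝ) := by
    simpa only [Nat.cast_succ] using! IsEquivalent.refl.add_isLittleO
      ((isLittleO_const_id_atTop (1 : ℝ)).comp_tendsto tendsto_natCast_atTop_atTop)
  exact hsucc.rpow (fun n ↦ n.cast_nonneg)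

lemma rpow_half_mul_factorial_rpow_succ {B : ℝ} (hB : 0 < B) (r : ℝ) (n : ℕ) :
    B ^ (((n + 1 : ℕ) : ℝ) / 2) * ((n + 1).factorial : ℝ) ^ r =
      (√B * ((n + 1 : ℕ) : ℝ) ^ r) * (B ^ ((n : ℝ) / 2) * (n.factorial : ℝ) ^ r) := by
  have hBpow : B ^ (((n + 1 : ℕ) : ℝ) / 2) = √B * B ^ ((n : ℝ) / 2) := by
    rw [Real.sqrt_eq_rpow, ← Real.rpow_add hB]
    push_cast
    ring_nf
  have hfact : ((n + 1).factorial : ℝ) ^ r = ((n + 1 : ℕ) : ℝ) ^ r * (n.factorial : ℝ) ^ r := by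
    rw [Nat.factorial_succ, Nat.cast_mul, Real.mul_rpow (by positivity) (by positivity)]
  rw [hBpow, hfact]
  ring

lemma isLittleO_rpow_rpow_atTop_of_lt {r t : ℝ} (hrt : r < t) :
    (fun x : ℝ ↦ x ^ r) =o[atTop] fun x : ℝ ↦ x ^ t := by
  refine isLittleO_of_tendsto' ?_ ?_
  · filter_upwards [eventually_gt_atTop 0] with x hx h
    exact absurd h (Real.rpow_pos_of_pos hx t).ne'
  · refine (tendsto_rpow_neg_atTop (sub_pos.mpr hrt)).congr' ?_
    filter_upwards [eventually_gt_atTop 0] with x hx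
    rw [neg_sub, Real.rpow_sub hx]

section PolynomialValues

variable {R : Type*} [Semiring R] {f : R →+* ℝ}

lemma isEquivalent_map_eval_natCast (hf : Function.Injective f) (p : R[X]) :
    (fun n : ℕ ↦ f (p.eval (n : R))) ~[atTop]
      fun n : ℕ ↦ f p.leadingCoeff * (n : ℝ) ^ (p.natDegree : ℝ) := by
  simpa only [Function.comp_def, eval_natCast_map, natDegree_map_eq_of_injective hf,
    leadingCoeff_map_of_injective hf, Real.rpow_natCast] using
    (p.map f).isEquivalent_atTop_lead.comp_tendsto tendsto_natCast_atTop_atTop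

lemma isLittleO_map_eval_natCast (hf : Function.Injective f) (p : R[X]) {r : ℝ}
    (hr : p.natDegree < r) :
    (fun n : ℕ ↦ f (p.eval (n : R))) =o[atTop] fun n : ℕ ↦ (n : ℝ) ^ r :=
  (isEquivalent_map_eval_natCast hf p).isBigO.trans_isLittleO <|
    ((isLittleO_rpow_rpow_atTop_of_lt hr).comp_tendsto tendsto_natCast_atTop_atTop).const_mul_left _

end PolynomialValues

lemma pos_of_recurrence {R : Type*} [Semiring R] [PartialOrder R] [IsStrictOrderedRing R]
    {a b q : ℕ → R} (ha : ∀ n, 0 < a n) (hb : ∀ n, 0 ≤ b n) (hq₀ : 0 < q 0) (hq₁ : 0 < q 1)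
    (hrec : ∀ n, q (n + 2) = a n * q (n + 1) + b n * q n) (n : ℕ) : 0 < q n := by
  induction n using Nat.twoStepInduction with
  | zero => exact hq₀
  | one => exact hq₁
  | more n ih₀ ih₁ =>
    rw [hrec]
    exact add_pos_of_pos_of_nonneg (mul_pos (ha n) ih₁) (mul_nonneg (hb n) ih₀.le)

theorem stmt_16_general {a b q : ℕ → ℝ} {B d : ℝ} (hB : 0 < B)
    (ha₀ : ∀ᶠ n in atTop, 0 ≤ a n) (ha : a =o[atTop] fun n : ℕ ↦ (n : ℝ) ^ (d / 2))
    (hb : b ~[atTop] fun n : ℕ ↦ B * (n : ℝ) ^ d) (hq : ∀ᶠ n in atTop, 0 < q n)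
    (hrec : ∀ᶠ n in atTop, q (n + 2) = a (n + 2) * q (n + 1) + b (n + 2) * q n) :
    Tendsto (fun n : ℕ ↦ (1 : ℝ) / n * Real.log (q n /
      (B ^ ((n : ℝ) / 2) * (n.factorial : ℝ) ^ (d / 2)))) atTop (𝓝 0) := by
  set s : ℕ → ℝ := fun n ↦ √B * (n : ℝ) ^ (d / 2) with hs
  have hs_sq : s ^ 2 = fun n : ℕ ↦ B * (n : ℝ) ^ d := by
    ext n
    rw [Pi.pow_apply, hs, mul_pow, Real.sq_sqrt hB.le, ← Real.rpow_mul_natCast n.cast_nonneg]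
    norm_num
  have hs_pos : ∀ᶠ n in atTop, 0 < s n := by
    filter_upwards [eventually_gt_atTop 0] with n hn
    positivity
  have hlog := isLittleO_log_div_of_recurrence
    (D := fun n ↦ B ^ ((n : ℝ) / 2) * (n.factorial : ℝ) ^ (d / 2)) hs_pos
    (IsEquivalent.refl.mul (isEquivalent_natCast_succ_rpow (d / 2)))
    (.of_forall fun n ↦ by positivity)
    (.of_forall (rpow_half_mul_factorial_rpow_succ hB (d / 2))) ha₀
    (ha.trans_isBigO (isBigO_self_const_mul (by positivity) _ _)) (hs_sq ▸ hb) hq hrec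
  simpa only [one_div_mul_eq_div] using hlog.tendsto_div_nhds_zero

/-- Appendix B, first case: `deg b > 2·deg a`.
For such a PCF with positive leading coefficient `B` of `b` and positive values on
positive integers, the denominators satisfy
`lim (1/n)·ln( qₙ / (B^{n/2}·(n!)^{d_b/2}) ) = 0`, i.e. `qₙ ≐ B^{n/2}·(n!)^{d_b/2}`
(real powers). -/
theorem stmt_16 (a b : Polynomial ℤ)
    (hdeg : 2 * a.natDegree < b.natDegree)
    (hB : 0 < b.leadingCoeff)
    (hapos : ∀ n : ℕ, 1 ≤ n → 0 < a.eval (n : ℤ))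
    (hbpos : ∀ n : ℕ, 1 ≤ n → 0 < b.eval (n : ℤ))
    (q : ℕ → ℤ)
    (hq0 : q 0 = 1)
    (hq1 : q 1 = a.eval 1 * q 0 + b.eval 1 * 0)
    (hqrec : ∀ n : ℕ, q (n + 2) = a.eval ((n : ℤ) + 2) * q (n + 1) + b.eval ((n : ℤ) + 2) * q n) :
    Tendsto (fun n : ℕ =>
        (1 : ℝ) / n * Real.log ((q n : ℝ) /
          ((b.leadingCoeff : ℝ) ^ ((n : ℝ) / 2) *
            (Nat.factorial n : ℝ) ^ ((b.natDegree : ℝ) / 2))))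
      atTop (nhds 0) := by
  have hqpos : ∀ n, 0 < q n :=
    pos_of_recurrence (fun n ↦ mod_cast hapos (n + 2) (by lia))
      (fun n ↦ mod_cast (hbpos (n + 2) (by lia)).le) (by simp [hq0])
      (by simpa [hq1, hq0] using hapos 1 le_rfl) hqrec
  have hadeg : (a.natDegree : ℝ) < (b.natDegree : ℝ) / 2 := by
    rw [lt_div_iff₀' two_pos]
    exact_mod_cast hdeg
  have hcast : Function.Injective (Int.castRingHom ℝ) := Int.cast_injective
  exact stmt_16_general (a := fun n ↦ (a.eval (n : ℤ) : ℤ)) (b := fun n ↦ (b.eval (n : ℤ) : ℤ))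
    (mod_cast hB)
    ((eventually_ge_atTop 1).mono fun n hn ↦ mod_cast (hapos n hn).le)
    (isLittleO_map_eval_natCast hcast a hadeg) (isEquivalent_map_eval_natCast hcast b)
    (.of_forall fun n ↦ mod_cast hqpos n) (.of_forall fun n ↦ mod_cast hqrec n)
end
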